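/- arXiv:math/0302132 — 4 statements merged into one kernel-verified Lean document; each statement's English description precedes it below -/
import Mathlib

section
/- Let p be a prime, m ≥ 1, n ≥ 1, and let C ⊆ (ℤ/p^mℤ)^n be a submodule with dual code C^⊥ = {v ∈ (ℤ/p^mℤ)^n : Σ_i c_i v_i = 0 for all c ∈ C}. Then in ℚ[y_0,…,y_{m−1},z] one has swe_{C^⊥}(y_0,…,y_{m−1},z) = (1/|C|) · swe_C(X_0,…,X_{m−1},Z), where X_k = z + (p−1)·Σ_{t=0}^{k−1} p^t·y_{m−1−t} − p^k·y_{m−1−k} for 0 ≤ k ≤ m−1, and Z = z + (p−1)·Σ_{t=0}^{m−1} p^t·y_{m−1−t}. (This is the MacWilliams transform for symmetrized weight enumerators over ℤ/p^mℤ, obtained by composing the m elementary transforms.) -/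
/-!
Work over `ℂ` with the primitive additive character `ψ = ZMod.stdAddChar` of `ℤ/p^mℤ`. Writing the
enumerator as `swe C = ∑_{c ∈ C} ∏_j X_{level (c_j)}`, where the level is the valuation, with value
`m` at `0`, the identity is Poisson summation (`macWilliams`): if each substituted polynomial is
`T_{level a} = ∑_b ψ(ab) X_{level b}`, then expanding the product over the coordinates and
exchanging sums leaves `∑_{c ∈ C} ψ(c · v)`, which is `|C|` for `v ∈ C^⊥` and `0` otherwise
(`sum_code`). Injectivity of `ℚ[X] → ℂ[X]` brings the identity back to `ℚ`.

It remains to compute the Fourier transform of a function `F (level b)` (`fourier_level`).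
Telescoping writes it as `F 0` plus a combination of indicators of the ideals `p^(m-t) ℤ/p^mℤ` with
coefficients `F (m-t) - F (m-t-1)`. The transform of such an indicator is `p^t` times the indicator
of `p^t ∣ a`, by a geometric sum (`sum_ideal`), and summation by parts (`abel_sum`) gives the stated
linear forms.
-/

open MvPolynomial
open scoped Classical

noncomputable section

/-- The symmetrized weight enumerator of a code `C ⊆ (ℤ/Nℤ)^n` (for `N = p^m`):
the variable `X i` for `i < m` records the number of coordinates of `p`-adic valuation `i`,
and the last variable `X m` (the variable `z`) records the number of zero coordinates. -/
def swe (p m : ℕ) {N n : ℕ} [NeZero N]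
    (C : Submodule (ZMod N) (Fin n → ZMod N)) : MvPolynomial (Fin (m + 1)) ℚ :=
  ∑ c : Fin n → ZMod N, if c ∈ C then
      (∏ i : Fin m, (X (Fin.castSucc i) : MvPolynomial (Fin (m + 1)) ℚ) ^
          (Finset.univ.filter fun j => c j ≠ 0 ∧ padicValNat p (c j).val = (i : ℕ)).card)
        * (X (Fin.last m) : MvPolynomial (Fin (m + 1)) ℚ) ^
            (Finset.univ.filter fun j => c j = 0).card
    else 0

/-- The dual code of a code `C`. -/
def dualCode {R : Type*} [CommRing R] {n : ℕ}
    (C : Submodule R (Fin n → R)) : Submodule R (Fin n → R) where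
  carrier := {v | ∀ c ∈ C, ∑ i, c i * v i = 0}
  zero_mem' := by intro c hc; simp
  add_mem' := by
    intro a b ha hb c hc
    have h1 := ha c hc
    have h2 := hb c hc
    simp only [Pi.add_apply, mul_add, Finset.sum_add_distrib, h1, h2, add_zero]
  smul_mem' := by
    intro r v hv c hc
    have h := hv c hc
    calc ∑ i, c i * (r • v) i = r * ∑ i, c i * v i := by
          rw [Finset.mul_sum]
          exact Finset.sum_congr rfl fun i _ => by
            simp [Pi.smul_apply, smul_eq_mul, mul_left_comm]
      _ = 0 := by rw [h, mul_zero]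

/-- The level of `a ∈ ℤ/p^mℤ`: its `p`-adic valuation if `a ≠ 0`, and `m` if `a = 0`. -/
def level (p m : ℕ) (a : ZMod (p ^ m)) : ℕ :=
  if a = 0 then m else padicValNat p a.val

lemma pow_dvd_val_iff {p m : ℕ} (hp : p.Prime) [NeZero (p ^ m)] (a : ZMod (p ^ m)) {i : ℕ}
    (hi : i ≤ m) : p ^ i ∣ a.val ↔ i ≤ level p m a := by
  have := Fact.mk hp
  unfold level
  split_ifs with h
  · simp [h, hi]
  · rw [padicValNat_dvd_iff_le]
    simpa using h

lemma level_lt {p m : ℕ} (hp : p.Prime) [NeZero (p ^ m)] {a : ZMod (p ^ m)} (ha : a ≠ 0) :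
    level p m a < m := by
  by_contra! h
  have := (pow_dvd_val_iff hp a le_rfl).2 h
  exact ha ((ZMod.val_eq_zero a).1 (Nat.eq_zero_of_dvd_of_lt this (ZMod.val_lt a)))

lemma level_le {p m : ℕ} (hp : p.Prime) [NeZero (p ^ m)] (a : ZMod (p ^ m)) :
    level p m a ≤ m := by
  by_cases h : a = 0
  · simp [level, h]
  · exact (level_lt hp h).le

lemma level_eq_iff {p m : ℕ} (hp : p.Prime) [NeZero (p ^ m)] (a : ZMod (p ^ m)) :
    level p m a = m ↔ a = 0 :=
  ⟨fun h => by_contra fun h0 => (level_lt hp h0).ne h, fun h => by simp [level, h]⟩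

lemma swe_eq {p m n : ℕ} (hp : p.Prime) [NeZero (p ^ m)]
    (C : Submodule (ZMod (p ^ m)) (Fin n → ZMod (p ^ m))) :
    swe p m C = ∑ c : Fin n → ZMod (p ^ m),
      if c ∈ C then ∏ j, (X (Fin.ofNat (m + 1) (level p m (c j))) :
        MvPolynomial (Fin (m + 1)) ℚ) else 0 := by
  unfold swe
  refine Finset.sum_congr rfl fun c _ => ?_
  congr 1
  have h2 : ∏ j, (X (Fin.ofNat (m + 1) (level p m (c j))) : MvPolynomial (Fin (m + 1)) ℚ)
      = ∏ k : Fin (m + 1), X k ^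
        (Finset.univ.filter fun j => Fin.ofNat (m + 1) (level p m (c j)) = k).card := by
    rw [← Finset.prod_fiberwise' Finset.univ (fun j => Fin.ofNat (m + 1) (level p m (c j)))
      (fun k => (X k : MvPolynomial (Fin (m + 1)) ℚ))]
    simp
  have hval : ∀ j, (Fin.ofNat (m + 1) (level p m (c j)) : ℕ) = level p m (c j) := fun j =>
    Nat.mod_eq_of_lt (Nat.lt_succ_of_le (level_le hp _))
  rw [h2, Fin.prod_univ_castSucc]
  congr 1
  · refine Finset.prod_congr rfl fun i _ => ?_
    congr 2
    ext j
    simp only [Finset.mem_filter, Finset.mem_univ, true_and, Fin.ext_iff, hval, Fin.val_castSucc]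
    by_cases h0 : c j = 0
    · simp [h0, level, i.2.ne']
    · simp [h0, level]
  · congr 2
    ext j
    simp only [Finset.mem_filter, Finset.mem_univ, true_and, Fin.ext_iff, hval, Fin.val_last,
      level_eq_iff hp]

lemma stdAddChar_eq_one_iff {N : ℕ} [NeZero N] (x : ZMod N) :
    ZMod.stdAddChar x = (1 : ℂ) ↔ x = 0 := by
  rw [← AddChar.map_zero_eq_one (ZMod.stdAddChar (N := N)), ZMod.injective_stdAddChar.eq_iff]

lemma stdAddChar_sum {N n : ℕ} [NeZero N] (f : Fin n → ZMod N) :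
    (ZMod.stdAddChar (∑ i, f i) : ℂ) = ∏ i, ZMod.stdAddChar (f i) :=
  map_prod (ZMod.stdAddChar (N := N)).toMonoidHom (fun i => Multiplicative.ofAdd (f i)) _

/-- Orthogonality of characters on a code: summing `c ↦ ψ(c · v)` over `C` detects `C^⊥`. -/
lemma sum_code {N n : ℕ} [NeZero N] (C : Submodule (ZMod N) (Fin n → ZMod N))
    (v : Fin n → ZMod N) :
    (∑ c : Fin n → ZMod N, if c ∈ C then ZMod.stdAddChar (∑ i, c i * v i) else (0 : ℂ)) =
      if v ∈ dualCode C then (Nat.card C : ℂ) else 0 := by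
  let f : C →+ ZMod N :=
    { toFun := fun c => ∑ i, (c : Fin n → ZMod N) i * v i
      map_zero' := by simp
      map_add' := by intro a b; simp [add_mul, Finset.sum_add_distrib] }
  let χ : AddChar C ℂ := (ZMod.stdAddChar (N := N)).compAddMonoidHom f
  have h1 : (∑ c : Fin n → ZMod N, if c ∈ C then ZMod.stdAddChar (∑ i, c i * v i) else (0 : ℂ))
      = ∑ c : C, χ c := by
    rw [← Finset.sum_filter]
    exact (Finset.sum_subtype _ (by simp) _)
  have h2 : χ = 0 ↔ v ∈ dualCode C := by
    constructor
    · intro h c hc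
      have := DFunLike.congr_fun h ⟨c, hc⟩
      exact (stdAddChar_eq_one_iff _).1 this
    · intro h
      ext c
      exact (stdAddChar_eq_one_iff _).2 (h c c.2)
  rw [h1, AddChar.sum_eq_ite]
  simp only [h2, Nat.card_eq_fintype_card]

/-- The ideal of `ℤ/p^mℤ` generated by `p^(m-t)` has `p^t` elements, and its annihilator is
generated by `p^t`, so the character
`b ↦ ψ(ab)` sums over it to `p^t` or to `0` according to whether `p^t ∣ a`. -/
lemma sum_ideal {p m : ℕ} (hp : p.Prime) [NeZero (p ^ m)] (a : ZMod (p ^ m)) {t : ℕ}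
    (ht : t ≤ m) :
    (∑ b : ZMod (p ^ m), if m - t ≤ level p m b then ZMod.stdAddChar (a * b) else (0 : ℂ)) =
      if t ≤ level p m a then (p : ℂ) ^ t else 0 := by
  have hpm : p ^ m = p ^ (m - t) * p ^ t := by rw [← pow_add]; congr 1; omega
  have hpos : 0 < p ^ (m - t) := pow_pos hp.pos _
  set ζ : ℂ := ZMod.stdAddChar (a * ((p ^ (m - t) : ℕ) : ZMod (p ^ m))) with hζ
  have h1 : (∑ b : ZMod (p ^ m), if m - t ≤ level p m b then ZMod.stdAddChar (a * b) else (0 : ℂ))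
      = ∑ j ∈ Finset.range (p ^ t), ζ ^ j := by
    rw [← Finset.sum_filter]
    symm
    have hv : ∀ j ∈ Finset.range (p ^ t),
        ((p ^ (m - t) * j : ℕ) : ZMod (p ^ m)).val = p ^ (m - t) * j := by
      intro j hj
      rw [ZMod.val_natCast, Nat.mod_eq_of_lt]
      rw [hpm]
      exact Nat.mul_lt_mul_of_pos_left (Finset.mem_range.1 hj) hpos
    refine Finset.sum_bij (fun j _ => ((p ^ (m - t) * j : ℕ) : ZMod (p ^ m))) ?_ ?_ ?_ ?_
    · intro j hj
      simp only [Finset.mem_filter, Finset.mem_univ, true_and]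
      rw [← pow_dvd_val_iff hp _ (Nat.sub_le m t), hv j hj]
      exact dvd_mul_right _ _
    · intro j hj k hk h
      have := congrArg ZMod.val h
      rw [hv j hj, hv k hk] at this
      exact Nat.eq_of_mul_eq_mul_left hpos this
    · intro b hb
      simp only [Finset.mem_filter, Finset.mem_univ, true_and] at hb
      rw [← pow_dvd_val_iff hp _ (Nat.sub_le m t)] at hb
      obtain ⟨j, hj⟩ := hb
      refine ⟨j, ?_, ?_⟩
      · have := ZMod.val_lt b
        rw [hj] at this
        rw [Finset.mem_range]
        exact Nat.lt_of_mul_lt_mul_left (this.trans_eq hpm)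
      · rw [← hj, ZMod.natCast_zmod_val]
    · intro j _
      rw [hζ, ← AddChar.map_nsmul_eq_pow]
      congr 1
      push_cast
      rw [nsmul_eq_mul]
      ring
  have hz : ζ = 1 ↔ t ≤ level p m a := by
    rw [hζ, stdAddChar_eq_one_iff, ← pow_dvd_val_iff hp a ht]
    conv_lhs => rw [← ZMod.natCast_zmod_val a, ← Nat.cast_mul, ZMod.natCast_eq_zero_iff]
    nth_rw 1 [hpm]
    rw [mul_comm (p ^ (m - t))]
    exact Nat.mul_dvd_mul_iff_right hpos
  have hpow : ζ ^ (p ^ t) = 1 := by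
    rw [hζ, ← AddChar.map_nsmul_eq_pow, stdAddChar_eq_one_iff, nsmul_eq_mul, mul_left_comm,
      ← Nat.cast_mul, mul_comm (p ^ t), ← hpm, ZMod.natCast_self, mul_zero]
  rw [h1]
  split_ifs with h
  · rw [hz.2 h]; simp
  · have := mul_geom_sum ζ (p ^ t)
    rw [hpow, sub_self, mul_eq_zero] at this
    exact this.resolve_left (sub_ne_zero.2 fun h' => h (hz.1 h'))

lemma telescope {A : Type*} [AddCommGroup A] (F : ℕ → A) (l M : ℕ) :
    (∑ i ∈ Finset.range M, if i + 1 ≤ l then F (i + 1) - F i else 0) = F (min l M) - F 0 := by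
  induction M with
  | zero => simp
  | succ M ih =>
    rw [Finset.sum_range_succ, ih]
    split_ifs with h
    · rw [min_eq_right h, min_eq_right (by omega)]; abel
    · rw [min_eq_left (by omega), min_eq_left (by omega)]; abel

lemma telescope_reflect {A : Type*} [AddCommGroup A] (F : ℕ → A) {l m : ℕ} (h : l ≤ m) :
    F l = (∑ t ∈ Finset.range m, if m - t ≤ l then F (m - t) - F (m - 1 - t) else 0) + F 0 := by
  have h1 := telescope F l m
  rw [← Finset.sum_range_reflect, min_eq_left h] at h1
  rw [eq_comm, ← eq_sub_iff_add_eq, ← h1]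
  refine Finset.sum_congr rfl fun t ht => ?_
  rw [show m - 1 - t + 1 = m - t by have := Finset.mem_range.1 ht; omega]

/-- Summation by parts for `∑ p^t (F (m-t) - F (m-1-t))`. -/
lemma abel_sum {A : Type*} [CommRing A] (P : A) (F : ℕ → A) (m k : ℕ) :
    ∑ t ∈ Finset.range k, P ^ t * (F (m - t) - F (m - 1 - t)) =
      F m + (P - 1) * ∑ t ∈ Finset.range k, P ^ t * F (m - 1 - t) - P ^ k * F (m - k) := by
  induction k with
  | zero => simp
  | succ k ih =>
    rw [Finset.sum_range_succ, ih, Finset.sum_range_succ, show m - (k + 1) = m - 1 - k by omega]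
    ring

/-- The Fourier transform on `ℤ/p^mℤ` of a function of the level. -/
lemma fourier_level {p m : ℕ} (hp : p.Prime) [NeZero (p ^ m)] {A : Type*} [CommRing A]
    [Algebra ℂ A] (F : ℕ → A) (a : ZMod (p ^ m)) :
    ∑ b : ZMod (p ^ m), algebraMap ℂ A (ZMod.stdAddChar (a * b)) * F (level p m b) =
      if level p m a < m then
        F m + ((p : A) - 1) * ∑ t ∈ Finset.range (level p m a), (p : A) ^ t * F (m - 1 - t)
          - (p : A) ^ (level p m a) * F (m - 1 - level p m a)
      else F m + ((p : A) - 1) * ∑ t ∈ Finset.range m, (p : A) ^ t * F (m - 1 - t) := by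
  have step : ∀ t ≤ m, ∑ b : ZMod (p ^ m), algebraMap ℂ A (ZMod.stdAddChar (a * b)) *
      (if m - t ≤ level p m b then 1 else 0) = if t ≤ level p m a then (p : A) ^ t else 0 := by
    intro t ht
    have := congrArg (algebraMap ℂ A) (sum_ideal hp a ht)
    rw [map_sum] at this
    simpa [apply_ite (algebraMap ℂ A)] using this
  have h1 : ∑ b : ZMod (p ^ m), algebraMap ℂ A (ZMod.stdAddChar (a * b)) * F (level p m b) =
      (∑ t ∈ Finset.range m, (if t ≤ level p m a then (p : A) ^ t else 0) *
        (F (m - t) - F (m - 1 - t))) + (if m ≤ level p m a then (p : A) ^ m else 0) * F 0 := by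
    have h2 : ∀ t ∈ Finset.range m, (if t ≤ level p m a then (p : A) ^ t else 0) *
        (F (m - t) - F (m - 1 - t)) =
        (∑ b : ZMod (p ^ m), algebraMap ℂ A (ZMod.stdAddChar (a * b)) *
          (if m - t ≤ level p m b then 1 else 0)) * (F (m - t) - F (m - 1 - t)) :=
      fun t ht => by rw [← step t (Finset.mem_range.1 ht).le]
    rw [← step m le_rfl, Finset.sum_congr rfl h2]
    simp_rw [Finset.sum_mul]
    rw [Finset.sum_comm (s := Finset.range m), ← Finset.sum_add_distrib]
    refine Finset.sum_congr rfl fun b _ => ?_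
    rw [telescope_reflect F (level_le hp b), mul_add, Finset.mul_sum]
    simp
  rw [h1]
  have hle := level_le hp a
  by_cases h : level p m a < m
  · rw [if_pos h, if_neg (by omega)]
    have h2 : ∑ t ∈ Finset.range m, (if t ≤ level p m a then (p : A) ^ t else 0) *
        (F (m - t) - F (m - 1 - t)) = ∑ t ∈ Finset.range (level p m a + 1), (p : A) ^ t *
        (F (m - t) - F (m - 1 - t)) := by
      simp_rw [ite_mul, zero_mul]
      rw [← Finset.sum_filter]
      refine Finset.sum_congr ?_ fun _ _ => rfl
      ext t
      simp only [Finset.mem_filter, Finset.mem_range]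
      omega
    rw [h2, abel_sum, Finset.sum_range_succ,
      show m - (level p m a + 1) = m - 1 - level p m a by omega]
    ring
  · rw [if_neg h, if_pos (by omega)]
    have h2 : ∑ t ∈ Finset.range m, (if t ≤ level p m a then (p : A) ^ t else 0) *
        (F (m - t) - F (m - 1 - t)) = ∑ t ∈ Finset.range m, (p : A) ^ t *
        (F (m - t) - F (m - 1 - t)) := by
      refine Finset.sum_congr rfl fun t ht => ?_
      rw [if_pos (by have := Finset.mem_range.1 ht; omega)]
    rw [h2, abel_sum, Nat.sub_self]
    ring

/-- Poisson summation for codes: if the substitution `T` is the Fourier transform of the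
level-dependent weight over `ℂ`, it carries `swe C` to `|C|` times `swe (dualCode C)`. -/
lemma macWilliams {p m n : ℕ} (hp : p.Prime) [NeZero (p ^ m)]
    (C : Submodule (ZMod (p ^ m)) (Fin n → ZMod (p ^ m)))
    (T : Fin (m + 1) → MvPolynomial (Fin (m + 1)) ℚ)
    (hT : ∀ a : ZMod (p ^ m), map (algebraMap ℚ ℂ) (T (Fin.ofNat (m + 1) (level p m a))) =
      ∑ b : ZMod (p ^ m), algebraMap ℂ (MvPolynomial (Fin (m + 1)) ℂ) (ZMod.stdAddChar (a * b)) *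
        X (Fin.ofNat (m + 1) (level p m b))) :
    swe p m (dualCode C) = (Nat.card C : ℚ)⁻¹ • aeval T (swe p m C) := by
  have hc : (Nat.card C : ℚ) ≠ 0 := Nat.cast_ne_zero.2 Nat.card_pos.ne'
  rw [eq_inv_smul_iff₀ hc]
  apply map_injective (algebraMap ℚ ℂ) (algebraMap ℚ ℂ).injective
  rw [swe_eq hp, swe_eq hp]
  have hR : map (algebraMap ℚ ℂ) (aeval T (∑ c : Fin n → ZMod (p ^ m),
      if c ∈ C then ∏ j, (X (Fin.ofNat (m + 1) (level p m (c j))) :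
        MvPolynomial (Fin (m + 1)) ℚ) else 0)) =
      ∑ c : Fin n → ZMod (p ^ m), ∑ v : Fin n → ZMod (p ^ m),
        algebraMap ℂ (MvPolynomial (Fin (m + 1)) ℂ)
          (if c ∈ C then ZMod.stdAddChar (∑ i, c i * v i) else 0) *
        ∏ j, X (Fin.ofNat (m + 1) (level p m (v j))) := by
    rw [map_sum, map_sum]
    refine Finset.sum_congr rfl fun c _ => ?_
    split_ifs with h
    · simp only [map_prod, aeval_X, hT]
      rw [Finset.prod_univ_sum, Fintype.piFinset_univ]
      refine Finset.sum_congr rfl fun v _ => ?_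
      rw [Finset.prod_mul_distrib, stdAddChar_sum, map_prod]
    · simp
  rw [hR, Finset.sum_comm]
  simp_rw [← Finset.sum_mul, ← map_sum, sum_code]
  rw [smul_eq_C_mul, map_mul, map_sum, Finset.mul_sum]
  refine Finset.sum_congr rfl fun v _ => ?_
  split_ifs with h
  · simp
  · simp


/-- The MacWilliams transform for symmetrized weight enumerators over `ℤ/p^mℤ`. -/
theorem stmt_1 (p m n : ℕ) (hp : p.Prime) (hm : 1 ≤ m) (hn : 1 ≤ n)
    (C : Submodule (ZMod (p ^ m)) (Fin n → ZMod (p ^ m))) :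
    letI : NeZero (p ^ m) := ⟨pow_ne_zero m hp.ne_zero⟩
    swe p m (dualCode C) =
      (Nat.card C : ℚ)⁻¹ •
        aeval (fun k : Fin (m + 1) =>
          if hk : (k : ℕ) < m then
            X (Fin.last m)
              + ((p : ℚ) - 1) • ∑ t ∈ Finset.range (k : ℕ),
                  (p : ℚ) ^ t • (X (⟨m - 1 - t, by omega⟩ : Fin (m + 1))
                    : MvPolynomial (Fin (m + 1)) ℚ)
              - (p : ℚ) ^ (k : ℕ) • X (⟨m - 1 - (k : ℕ), by omega⟩ : Fin (m + 1))
          else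
            X (Fin.last m)
              + ((p : ℚ) - 1) • ∑ t ∈ Finset.range m,
                  (p : ℚ) ^ t • (X (⟨m - 1 - t, by omega⟩ : Fin (m + 1))
                    : MvPolynomial (Fin (m + 1)) ℚ))
          (swe p m C) := by
  let : NeZero (p ^ m) := ⟨pow_ne_zero m hp.ne_zero⟩
  refine macWilliams hp C _ fun a => ?_
  have hof : ∀ i (h : i < m + 1), (⟨i, h⟩ : Fin (m + 1)) = Fin.ofNat (m + 1) i := fun i h =>
    Fin.ext (Nat.mod_eq_of_lt h).symm
  have hval : (Fin.ofNat (m + 1) (level p m a) : ℕ) = level p m a :=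
    Nat.mod_eq_of_lt (Nat.lt_succ_of_le (level_le hp _))
  have hlast : Fin.last m = Fin.ofNat (m + 1) m := hof m _
  rw [fourier_level hp (fun i => (X (Fin.ofNat (m + 1) i) : MvPolynomial (Fin (m + 1)) ℂ)) a]
  simp only [hval, hof, hlast]
  split_ifs with h
  · simp [smul_eq_C_mul]
  · simp [smul_eq_C_mul]
end
end

section
/- The Octacode O is self-dual, i.e. O = O^⊥ with respect to the standard bilinear form on (ℤ/4ℤ)^8, and its symmetrized weight enumerator is swe_O(x_0,x_1,z) = z^8 + 112·z^3·x_0^4·x_1 + 112·z·x_0^4·x_1^3 + 16·x_0^8 + 14·z^4·x_1^4 + x_1^8. -/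
/-!
Since `h` is monic of degree 3, the remainder of `X⁷ - 1` modulo `h` vanishes; together with the
reduction modulo 2 this forces `h = X³ + 2X² + X + 3` (`Polynomial.hensel_lift_eq`).
As `h * g = X⁷ - 1` with `g` monic of degree 4, every multiple of `h` modulo `X⁷ - 1` is `r * h`
with `deg r < 4`, so `O` is the image of an explicit injective linear encoder
`octaEnc : (ℤ/4ℤ)⁴ → (ℤ/4ℤ)⁸` (`Polynomial.octa_mem`, `octaEnc_injective`).

Self-duality is linear algebra over `ℤ/4ℤ`: any two encoded words are orthogonal, and the four
orthogonality relations with the rows of the generator matrix express the first four coordinates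
of a dual word through the last four, which is exactly the condition of being encoded.
The weight enumerator is obtained by counting the types `(n₀, n₁, n_∞)` of the 256 encoded words.
-/

open MvPolynomial
open scoped Classical

noncomputable section

/-- The encoder of the Octacode: coefficients of `(a₀ + a₁X + a₂X² + a₃X³)(X³ + 2X² + X + 3)`,
followed by the negated sum of these seven coefficients, which is `a₀ + a₁ + a₂ + a₃` modulo 4. -/
def octaEnc (a : Fin 4 → ZMod 4) : Fin 8 → ZMod 4 :=
  ![3 * a 0, a 0 + 3 * a 1, 2 * a 0 + a 1 + 3 * a 2, a 0 + 2 * a 1 + a 2 + 3 * a 3,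
    a 1 + 2 * a 2 + a 3, a 2 + 2 * a 3, a 3, a 0 + a 1 + a 2 + a 3]

/-- `(n₀, n₁, n_∞)` for a word over `ℤ/4ℤ`; the units are `1, 3`, and `2` is the only
element of valuation `1`. -/
def octaType (c : Fin 8 → ZMod 4) : ℕ × ℕ × ℕ :=
  ((Finset.univ.filter fun j => c j = 1 ∨ c j = 3).card,
    (Finset.univ.filter fun j => c j = 2).card, (Finset.univ.filter fun j => c j = 0).card)

lemma four_eq_zero_zmod : (4 : ZMod 4) = 0 := by decide

namespace Polynomial

/-- The remainder of `X⁷ - 1` modulo `X³ + aX² + bX + c` must vanish, which leaves a single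
lift of `X³ + X + 1`. -/
lemma hensel_lift_eq (h : (ZMod 4)[X]) (hmono : h.Monic) (hdeg : h.natDegree = 3)
    (hdvd : h ∣ (X ^ 7 - 1))
    (hred : h.map (ZMod.castHom (by norm_num : (2:ℕ) ∣ 4) (ZMod 2)) = X ^ 3 + X + 1) :
    h = X ^ 3 + 2 * X ^ 2 + X + 3 := by
  have hc3 : h.coeff 3 = 1 := by rw [← hdeg]; exact hmono.coeff_natDegree
  obtain ⟨a, ha⟩ : ∃ a, h.coeff 2 = a := ⟨_, rfl⟩
  obtain ⟨b, hb⟩ : ∃ b, h.coeff 1 = b := ⟨_, rfl⟩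
  obtain ⟨c, hc⟩ : ∃ c, h.coeff 0 = c := ⟨_, rfl⟩
  have hh : h = X ^ 3 + C a * X ^ 2 + C b * X + C c := by
    rw [h.as_sum_range' 4 (by omega)]
    simp only [Finset.sum_range_succ, Finset.sum_range_zero, ha, hb, hc, hc3,
      ← C_mul_X_pow_eq_monomial]
    simp only [C_1]
    ring
  have e2 := congrArg (fun q => coeff q 2) hred
  have e1 := congrArg (fun q => coeff q 1) hred
  have e0 := congrArg (fun q => coeff q 0) hred
  simp [ha, coeff_X, coeff_one] at e2
  simp [hb, coeff_X, coeff_one] at e1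
  simp [hc, coeff_X, coeff_one] at e0
  -- `X⁴ + s₁X³ + s₂X² + s₃X + s₄` is the quotient of `X⁷ - 1` by `h`.
  obtain ⟨s1, h1⟩ : ∃ s, s = -a := ⟨_, rfl⟩
  obtain ⟨s2, h2⟩ : ∃ s, s = -a * s1 - b := ⟨_, rfl⟩
  obtain ⟨s3, h3⟩ : ∃ s, s = -a * s2 - b * s1 - c := ⟨_, rfl⟩
  obtain ⟨s4, h4⟩ : ∃ s, s = -a * s3 - b * s2 - c * s1 := ⟨_, rfl⟩
  have hr : h ∣ C (-a * s4 - b * s3 - c * s2) * X ^ 2 + C (-b * s4 - c * s3) * X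
      + C (-c * s4 - 1) := by
    have key : C (-a * s4 - b * s3 - c * s2) * X ^ 2 + C (-b * s4 - c * s3) * X
        + C (-c * s4 - 1) = (X ^ 7 - 1) -
        h * (X ^ 4 + C s1 * X ^ 3 + C s2 * X ^ 2 + C s3 * X + C s4) := by
      rw [hh, h4, h3, h2, h1]
      simp only [map_sub, map_mul, map_neg, C_1]
      ring
    rw [key]
    exact dvd_sub hdvd (dvd_mul_right _ _)
  have hr0 : C (-a * s4 - b * s3 - c * s2) * X ^ 2 + C (-b * s4 - c * s3) * X
      + C (-c * s4 - 1) = 0 := by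
    by_contra hne
    have := hmono.not_dvd_of_natDegree_lt hne
      (by rw [hdeg]; exact lt_of_le_of_lt natDegree_quadratic_le (by norm_num))
    exact this hr
  have r2 := congrArg (fun q => coeff q 2) hr0
  have r1 := congrArg (fun q => coeff q 1) hr0
  have r0 := congrArg (fun q => coeff q 0) hr0
  simp only [coeff_add, coeff_C_mul, coeff_X_pow, coeff_X, coeff_C, coeff_zero] at r2 r1 r0
  norm_num at r2 r1 r0
  subst h1 h2 h3 h4
  have hab : ∀ u : ZMod 4, (u.cast : ZMod 2) = 0 → u = 0 ∨ u = 2 := by decide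
  have hodd : ∀ u : ZMod 4, (u.cast : ZMod 2) = 1 → u = 1 ∨ u = 3 := by decide
  have habc : a = 2 ∧ b = 1 ∧ c = 3 := by
    rcases hab a e2 with ha1 | ha1 <;> rcases hodd b e1 with hb1 | hb1 <;>
      rcases hodd c e0 with hc1 | hc1 <;> rw [ha1, hb1, hc1] at r0 r1 r2 <;>
      first
        | exact ⟨ha1, hb1, hc1⟩
        | exact absurd r0 (by decide)
        | exact absurd r1 (by decide)
        | exact absurd r2 (by decide)
  rw [hh, habc.1, habc.2.1, habc.2.2, C_1, one_mul]
  rfl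

lemma octa_factor : (X ^ 3 + 2 * X ^ 2 + X + 3 : (ZMod 4)[X]) *
    (X ^ 4 + 2 * X ^ 3 + 3 * X ^ 2 + X + 1) = X ^ 7 - 1 := by
  have h4 : (4 : (ZMod 4)[X]) = 0 := by
    rw [show (4 : (ZMod 4)[X]) = C 4 from rfl, four_eq_zero_zmod, C_0]
  linear_combination (X ^ 6 + 2 * X ^ 5 + 3 * X ^ 4 + 3 * X ^ 3 + 3 * X ^ 2 + X + 1) * h4

/-- For `deg r < 4` the product `r * h` is already reduced modulo `X⁷ - 1`, and its coefficients
are the first seven coordinates of the encoder. -/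
lemma octa_cubic_mod (a : Fin 4 → ZMod 4) :
    ((C (a 0) + C (a 1) * X + C (a 2) * X ^ 2 + C (a 3) * X ^ 3) *
      (X ^ 3 + 2 * X ^ 2 + X + 3)) %ₘ (X ^ 7 - 1) =
    C (octaEnc a 0) + C (octaEnc a 1) * X + C (octaEnc a 2) * X ^ 2 + C (octaEnc a 3) * X ^ 3
      + C (octaEnc a 4) * X ^ 4 + C (octaEnc a 5) * X ^ 5 + C (octaEnc a 6) * X ^ 6 := by
  have e : (C (a 0) + C (a 1) * X + C (a 2) * X ^ 2 + C (a 3) * X ^ 3) *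
      (X ^ 3 + 2 * X ^ 2 + X + 3) =
    C (octaEnc a 0) + C (octaEnc a 1) * X + C (octaEnc a 2) * X ^ 2 + C (octaEnc a 3) * X ^ 3
      + C (octaEnc a 4) * X ^ 4 + C (octaEnc a 5) * X ^ 5 + C (octaEnc a 6) * X ^ 6 := by
    have h2 : C (2 : ZMod 4) = 2 := rfl
    have h3 : C (3 : ZMod 4) = 3 := rfl
    simp [octaEnc, h2, h3]
    ring
  have hm : (X ^ 7 - 1 : (ZMod 4)[X]).Monic := monic_X_pow_sub_C 1 (by norm_num)
  have : Fact (1 < 4) := ⟨by norm_num⟩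
  rw [e]
  refine (modByMonic_eq_self_iff hm).2 ?_
  have : (X ^ 7 - 1 : (ZMod 4)[X]).degree = 7 := degree_X_pow_sub_C (by norm_num) 1
  rw [this]
  refine lt_of_le_of_lt (b := 6) ?_ (by norm_num)
  compute_degree!

/-- The defining condition of the Octacode describes the image of the encoder: modulo `X⁷ - 1`,
a multiplier `f` may be replaced by its remainder modulo the cofactor of `h`. -/
lemma octa_mem (c : Fin 8 → ZMod 4) :
    ((∃ f : (ZMod 4)[X], ∀ j : Fin 7, c (Fin.castSucc j) =
        ((f * (X ^ 3 + 2 * X ^ 2 + X + 3)) %ₘ (X ^ 7 - 1)).coeff (j : ℕ)) ∧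
      c (Fin.last 7) = - ∑ j : Fin 7, c (Fin.castSucc j)) ↔ ∃ a, octaEnc a = c := by
  have hm : (X ^ 7 - 1 : (ZMod 4)[X]).Monic := monic_X_pow_sub_C 1 (by norm_num)
  have hlast (a : Fin 4 → ZMod 4) :
      octaEnc a (Fin.last 7) = - ∑ j : Fin 7, octaEnc a (Fin.castSucc j) := by
    simp [octaEnc, Fin.sum_univ_succ, Fin.last]
    linear_combination 2 * (a 0 + a 1 + a 2 + a 3) * four_eq_zero_zmod
  have hco (a : Fin 4 → ZMod 4) (j : Fin 7) : octaEnc a (Fin.castSucc j) =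
      (((C (a 0) + C (a 1) * X + C (a 2) * X ^ 2 + C (a 3) * X ^ 3) *
      (X ^ 3 + 2 * X ^ 2 + X + 3)) %ₘ (X ^ 7 - 1)).coeff (j : ℕ) := by
    rw [octa_cubic_mod]
    simp only [coeff_add, coeff_C_mul, coeff_X_pow, coeff_X, coeff_C]
    fin_cases j <;> simp
  constructor
  · rintro ⟨⟨f, hf⟩, hl⟩
    set g : (ZMod 4)[X] := X ^ 4 + 2 * X ^ 3 + 3 * X ^ 2 + X + 1 with hg
    have hgd : g.natDegree = 4 := by rw [hg]; compute_degree!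
    have hgm : g.Monic := by rw [hg]; monicity!
    set r := f %ₘ g with hr
    have hrd : r.natDegree < 4 := by
      have := natDegree_modByMonic_lt f hgm (by intro h; simp [h] at hgd)
      rw [← hr, hgd] at this
      exact this
    have hrc : r = C (r.coeff 0) + C (r.coeff 1) * X + C (r.coeff 2) * X ^ 2
        + C (r.coeff 3) * X ^ 3 := by
      conv_lhs => rw [r.as_sum_range' 4 hrd]
      simp only [Finset.sum_range_succ, Finset.sum_range_zero, ← C_mul_X_pow_eq_monomial]
      ring
    have hfr : (f * (X ^ 3 + 2 * X ^ 2 + X + 3)) %ₘ (X ^ 7 - 1) =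
        (r * (X ^ 3 + 2 * X ^ 2 + X + 3)) %ₘ (X ^ 7 - 1) := by
      apply modByMonic_eq_of_dvd_sub hm
      refine ⟨f /ₘ g, ?_⟩
      have h1 := modByMonic_add_div f g
      rw [← octa_factor]
      linear_combination -(X ^ 3 + 2 * X ^ 2 + X + 3 : (ZMod 4)[X]) * h1
    have hall (j : Fin 7) : octaEnc (fun i => r.coeff i) (Fin.castSucc j) =
        c (Fin.castSucc j) := by
      rw [hf, hfr, hco]
      conv_rhs => rw [hrc]
      rfl
    refine ⟨fun i => r.coeff i, ?_⟩
    ext1 j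
    refine Fin.lastCases ?_ hall j
    rw [hlast, hl, Finset.sum_congr rfl fun j _ => hall j]
  · rintro ⟨a, rfl⟩
    exact ⟨⟨_, hco a⟩, hlast a⟩
end Polynomial

lemma octaEnc_injective : Function.Injective octaEnc := by
  intro a b hab
  have e7 := congrFun hab 7
  have e6 := congrFun hab 6
  have e5 := congrFun hab 5
  have e4 := congrFun hab 4
  simp [octaEnc] at e7 e6 e5 e4
  rw [e6] at e5 e4 e7
  have f5 := add_right_cancel e5
  rw [f5] at e4 e7
  have f4 : a 1 = b 1 := by linear_combination e4
  have f7 : a 0 = b 0 := by linear_combination e7 - f4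
  funext i
  fin_cases i <;> assumption

lemma octaEnc_orthogonal (a b : Fin 4 → ZMod 4) : ∑ i, octaEnc a i * octaEnc b i = 0 := by
  simp [octaEnc, Fin.sum_univ_succ]
  grind

/-- A word orthogonal to the four rows of the generator matrix is a codeword. -/
lemma octaEnc_of_orthogonal (v : Fin 8 → ZMod 4)
    (hv : ∀ a, ∑ i, octaEnc a i * v i = 0) : ∃ a, octaEnc a = v := by
  have e0 := hv ![1, 0, 0, 0]
  have e1 := hv ![0, 1, 0, 0]
  have e2 := hv ![0, 0, 1, 0]
  have e3 := hv ![0, 0, 0, 1]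
  simp [octaEnc, Fin.sum_univ_eight] at e0 e1 e2 e3
  -- Back substitution from the coordinates `4, 5, 6, 7` of `octaEnc a = v`.
  refine ⟨![v 7 - v 4 + v 5 - 2 * v 6, v 4 - 2 * v 5 + 3 * v 6, v 5 - 2 * v 6, v 6], ?_⟩
  funext i
  fin_cases i <;> simp [octaEnc] <;> grind

/-- Distribution of the types of the 256 codewords, in the form of a sum over codewords. -/
lemma octa_sum (F : ℕ × ℕ × ℕ → MvPolynomial (Fin 3) ℚ) :
    ∑ a, F (octaType (octaEnc a)) = F (0, 0, 8) + 112 * F (4, 1, 3) + 112 * F (4, 3, 1)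
      + 16 * F (8, 0, 0) + 14 * F (0, 4, 4) + F (0, 8, 0) := by
  have key : (Finset.univ.val.map fun a => octaType (octaEnc a)) =
      Multiset.replicate 1 (0, 0, 8) + Multiset.replicate 112 (4, 1, 3)
      + Multiset.replicate 112 (4, 3, 1) + Multiset.replicate 16 (8, 0, 0)
      + Multiset.replicate 14 (0, 4, 4) + Multiset.replicate 1 (0, 8, 0) := by
    unfold octaType octaEnc
    decide +kernel
  have := congrArg (fun s => (s.map F).sum) key
  simp only [Multiset.map_map, Multiset.map_add, Multiset.sum_add, Multiset.map_replicate,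
    Multiset.sum_replicate] at this
  rw [Finset.sum_eq_multiset_sum]
  refine this.trans ?_
  simp [nsmul_eq_mul]

/-- The Octacode is self-dual and has the stated symmetrized weight enumerator. -/
theorem stmt_2 (h : Polynomial (ZMod 4)) (hmono : h.Monic) (hdeg : h.natDegree = 3)
    (hdvd : h ∣ (Polynomial.X ^ 7 - 1))
    (hred : h.map (ZMod.castHom (by norm_num : (2:ℕ) ∣ 4) (ZMod 2)) =
      Polynomial.X ^ 3 + Polynomial.X + 1)
    (O : Submodule (ZMod 4) (Fin 8 → ZMod 4))
    (hO : ∀ c : Fin 8 → ZMod 4, c ∈ O ↔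
      ((∃ f : Polynomial (ZMod 4), ∀ j : Fin 7,
          c (Fin.castSucc j) = ((f * h) %ₘ (Polynomial.X ^ 7 - 1)).coeff (j : ℕ)) ∧
        c (Fin.last 7) = - ∑ j : Fin 7, c (Fin.castSucc j))) :
    dualCode O = O ∧
    swe 2 2 O =
      X 2 ^ 8 + 112 * X 2 ^ 3 * X 0 ^ 4 * X 1 + 112 * X 2 * X 0 ^ 4 * X 1 ^ 3
        + 16 * X 0 ^ 8 + 14 * X 2 ^ 4 * X 1 ^ 4 + X 1 ^ 8 := by
  have hmem (c : Fin 8 → ZMod 4) : c ∈ O ↔ ∃ a, octaEnc a = c := by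
    rw [hO, Polynomial.hensel_lift_eq h hmono hdeg hdvd hred, Polynomial.octa_mem]
  constructor
  · ext v
    constructor
    · intro hv
      exact (hmem v).2 (octaEnc_of_orthogonal v fun a => hv _ ((hmem _).2 ⟨a, rfl⟩))
    · intro hv c hc
      obtain ⟨a, rfl⟩ := (hmem v).1 hv
      obtain ⟨b, rfl⟩ := (hmem c).1 hc
      exact octaEnc_orthogonal b a
  · have hval (u : ZMod 4) : (u ≠ 0 ∧ padicValNat 2 u.val = 0 ↔ u = 1 ∨ u = 3) ∧
        (u ≠ 0 ∧ padicValNat 2 u.val = 1 ↔ u = 2) := by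
      have h1 : padicValNat 2 (ZMod.val (1 : ZMod 4)) = 0 := by
        rw [show ZMod.val (1 : ZMod 4) = 1 from rfl]; simp
      have h2 : padicValNat 2 (ZMod.val (2 : ZMod 4)) = 1 := by
        rw [show ZMod.val (2 : ZMod 4) = 2 from rfl]; simp
      have h3 : padicValNat 2 (ZMod.val (3 : ZMod 4)) = 0 := by
        rw [show ZMod.val (3 : ZMod 4) = 3 from rfl]
        exact padicValNat.eq_zero_of_not_dvd (by norm_num)
      have hu : u = 0 ∨ u = 1 ∨ u = 2 ∨ u = 3 := by revert u; decide
      rcases hu with rfl | rfl | rfl | rfl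
      · exact ⟨⟨fun h => absurd rfl h.1, fun h => absurd h (by decide)⟩,
          ⟨fun h => absurd rfl h.1, fun h => absurd h (by decide)⟩⟩
      · simp only [h1]; decide
      · simp only [h2]; decide
      · simp only [h3]; decide
    have hsum : swe 2 2 O = ∑ a, (fun t : ℕ × ℕ × ℕ =>
        (X 0 ^ t.1 * X 1 ^ t.2.1 * X 2 ^ t.2.2 : MvPolynomial (Fin 3) ℚ))
          (octaType (octaEnc a)) := by
      unfold swe
      rw [← Finset.sum_filter]
      symm
      refine Finset.sum_bij (fun a _ => octaEnc a) (by simp [hmem])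
        (fun a _ b _ hab => octaEnc_injective hab) (by simp [hmem]) ?_
      intro a _
      simp only [octaType, Fin.prod_univ_two, Fin.val_zero, Fin.val_one, (hval _).1, (hval _).2]
      rfl
    have hfin := octa_sum fun t : ℕ × ℕ × ℕ =>
      (X 0 ^ t.1 * X 1 ^ t.2.1 * X 2 ^ t.2.2 : MvPolynomial (Fin 3) ℚ)
    rw [hsum]
    rw [hfin]
    simp
    ring
end
end

section
/- Every codeword u of the Octacode O ⊆ (ℤ/4ℤ)^8 whose coordinatewise reduction mod 2 is nonzero has Hamming weight at least 5; every nonzero codeword v of the dual of the mod-2 reduction code Ō = {c mod 2 : c ∈ O} ⊆ (ℤ/2ℤ)^8 has Hamming weight at least 4; consequently, for every such pair (u,v) there exists a coordinate position at which both u and v are nonzero (their supports intersect, so the disjoint-support sum D_{2,1} for the Octacode is empty). -/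
open MvPolynomial
open scoped Classical

noncomputable section

/-!
Long division of `X ^ 7 - 1` by a cubic with undetermined coefficients leaves a remainder that must
vanish, and among the lifts of `X ^ 3 + X + 1` this forces `h = X ^ 3 + 2 X ^ 2 + X + 3`
(`hensel_lift_eq`). Since `h` divides `X ^ 7 - 1`, reduction modulo `X ^ 7 - 1` preserves
divisibility by `h`, so the Octacode is the set of extended coefficient vectors of `h * q` with
`deg q ≤ 3`, i.e. a free code of rank 4 with an explicit generator matrix (`mem_iff_octaword`).

Over the 256 codewords, the bound 5 for words that are nonzero mod 2 is a finite check. A vector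
dual to the reduction satisfies the four parity checks given by the reduced generators, and the
bound 4 is a finite check over the 256 binary vectors. The supports meet because `5 + 4 > 8`.
-/

/-- The codeword of the Octacode attached to the message polynomial
`a + b X + c X ^ 2 + d X ^ 3`: the coefficients of its product with `X ^ 3 + 2 X ^ 2 + X + 3`,
followed by minus their sum. -/
def octaword (a b c d : ZMod 4) : Fin 8 → ZMod 4 :=
  ![3 * a, a + 3 * b, 2 * a + b + 3 * c, a + 2 * b + c + 3 * d, b + 2 * c + d, c + 2 * d, d,
    a + b + c + d]

theorem cubic_eq (p : Polynomial (ZMod 4)) (hp : p.natDegree ≤ 3) :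
    p = Polynomial.C (p.coeff 0) + Polynomial.C (p.coeff 1) * Polynomial.X +
      Polynomial.C (p.coeff 2) * Polynomial.X ^ 2 +
      Polynomial.C (p.coeff 3) * Polynomial.X ^ 3 := by
  conv_lhs => rw [Polynomial.as_sum_range_C_mul_X_pow' p (n := 4) (by omega : p.natDegree < 4)]
  simp [Finset.sum_range_succ]

/-- The coefficients of the Hensel lift are pinned down by their parities and by the vanishing of
the remainder of `X ^ 7 - 1` on division by `X ^ 3 + a X ^ 2 + b X + c`. -/
theorem hensel_coeffs : ∀ a b c : ZMod 4,
    ZMod.castHom (by norm_num : (2:ℕ) ∣ 4) (ZMod 2) a = 0 →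
    ZMod.castHom (by norm_num : (2:ℕ) ∣ 4) (ZMod 2) b = 1 →
    ZMod.castHom (by norm_num : (2:ℕ) ∣ 4) (ZMod 2) c = 1 →
    (let q2 := a ^ 2 - b
     let q1 := -a * q2 + b * a - c
     let q0 := -a * q1 - b * q2 + c * a
     a * q0 + b * q1 + c * q2 = 0 ∧ b * q0 + c * q1 = 0 ∧ c * q0 + 1 = 0) →
    a = 2 ∧ b = 1 ∧ c = 3 := by
  decide +kernel

theorem hensel_lift_eq (h : Polynomial (ZMod 4)) (hmono : h.Monic) (hdeg : h.natDegree = 3)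
    (hdvd : h ∣ (Polynomial.X ^ 7 - 1))
    (hred : h.map (ZMod.castHom (by norm_num : (2:ℕ) ∣ 4) (ZMod 2)) =
      Polynomial.X ^ 3 + Polynomial.X + 1) :
    h = Polynomial.C 3 + Polynomial.X + Polynomial.C 2 * Polynomial.X ^ 2 +
      Polynomial.X ^ 3 := by
  have h3 : h.coeff 3 = 1 := by rw [← hdeg]; exact hmono
  have hform := cubic_eq h hdeg.le
  have e0 := congrArg (fun p => Polynomial.coeff p 0) hred
  have e1 := congrArg (fun p => Polynomial.coeff p 1) hred
  have e2 := congrArg (fun p => Polynomial.coeff p 2) hred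
  simp only [Polynomial.coeff_map] at e0 e1 e2
  simp [Polynomial.coeff_X, Polynomial.coeff_one, -ZMod.castHom_apply] at e0 e1 e2
  rw [h3] at hform
  generalize h.coeff 0 = c at *
  generalize h.coeff 1 = b at *
  generalize h.coeff 2 = a at *
  -- The quotient of the division is `X ^ 4 - a X ^ 3 + q2 X ^ 2 + q1 X + q0`.
  obtain ⟨q2, hq2⟩ : ∃ q2, q2 = a ^ 2 - b := ⟨_, rfl⟩
  obtain ⟨q1, hq1⟩ : ∃ q1, q1 = -a * q2 + b * a - c := ⟨_, rfl⟩
  obtain ⟨q0, hq0⟩ : ∃ q0, q0 = -a * q1 - b * q2 + c * a := ⟨_, rfl⟩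
  have hr : h ∣ Polynomial.C (a * q0 + b * q1 + c * q2) * Polynomial.X ^ 2 +
      Polynomial.C (b * q0 + c * q1) * Polynomial.X + Polynomial.C (c * q0 + 1) := by
    have key : Polynomial.C (a * q0 + b * q1 + c * q2) * Polynomial.X ^ 2 +
        Polynomial.C (b * q0 + c * q1) * Polynomial.X + Polynomial.C (c * q0 + 1) =
        h * (Polynomial.X ^ 4 - Polynomial.C a * Polynomial.X ^ 3 +
          Polynomial.C q2 * Polynomial.X ^ 2 + Polynomial.C q1 * Polynomial.X +
          Polynomial.C q0) - (Polynomial.X ^ 7 - 1) := by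
      rw [hform, hq0, hq1, hq2]
      simp only [map_add, map_mul, map_sub, map_neg, map_pow, map_one]
      ring
    rw [key]
    exact dvd_sub (dvd_mul_right _ _) hdvd
  have hzero : Polynomial.C (a * q0 + b * q1 + c * q2) * Polynomial.X ^ 2 +
      Polynomial.C (b * q0 + c * q1) * Polynomial.X + Polynomial.C (c * q0 + 1) = 0 := by
    by_contra hne
    refine hmono.not_dvd_of_natDegree_lt hne ?_ hr
    rw [hdeg]
    exact Nat.lt_succ_of_le Polynomial.natDegree_quadratic_le
  have r0 := congrArg (fun p => Polynomial.coeff p 0) hzero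
  have r1 := congrArg (fun p => Polynomial.coeff p 1) hzero
  have r2 := congrArg (fun p => Polynomial.coeff p 2) hzero
  simp only [Polynomial.coeff_add, Polynomial.coeff_C_mul, Polynomial.coeff_X_pow,
    Polynomial.coeff_X, Polynomial.coeff_C, Polynomial.coeff_zero] at r0 r1 r2
  norm_num at r0 r1 r2
  subst hq0 hq1 hq2
  obtain ⟨rfl, rfl, rfl⟩ := hensel_coeffs a b c e2 e1 e0 ⟨r2, r1, r0⟩
  rw [hform]
  simp only [map_one, one_mul]

/-- The Octacode is the free code of rank 4 formed by the words `octaword a b c d`. -/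
theorem mem_iff_octaword (h : Polynomial (ZMod 4))
    (hh : h = Polynomial.C 3 + Polynomial.X + Polynomial.C 2 * Polynomial.X ^ 2 +
      Polynomial.X ^ 3) (hmono : h.Monic) (hdeg : h.natDegree = 3)
    (hdvd : h ∣ (Polynomial.X ^ 7 - 1)) (u : Fin 8 → ZMod 4) :
    ((∃ f : Polynomial (ZMod 4), ∀ j : Fin 7,
          u (Fin.castSucc j) = ((f * h) %ₘ (Polynomial.X ^ 7 - 1)).coeff (j : ℕ)) ∧
        u (Fin.last 7) = - ∑ j : Fin 7, u (Fin.castSucc j)) ↔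
      ∃ a b c d, u = octaword a b c d := by
  have hnt : Nontrivial (ZMod 4) := ⟨0, 1, by decide⟩
  have hM : (Polynomial.X ^ 7 - 1 : Polynomial (ZMod 4)).Monic :=
    Polynomial.monic_X_pow_sub_C 1 (by norm_num)
  have hMdeg : (Polynomial.X ^ 7 - 1 : Polynomial (ZMod 4)).natDegree = 7 :=
    Polynomial.natDegree_X_pow_sub_C (r := 1)
  have hcoeff : ∀ (a b c d : ZMod 4) (j : Fin 7),
      ((Polynomial.C a + Polynomial.C b * Polynomial.X + Polynomial.C c * Polynomial.X ^ 2 +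
        Polynomial.C d * Polynomial.X ^ 3) * h).coeff (j : ℕ) =
      octaword a b c d (Fin.castSucc j) := by
    intro a b c d j
    have key : (Polynomial.C a + Polynomial.C b * Polynomial.X +
          Polynomial.C c * Polynomial.X ^ 2 + Polynomial.C d * Polynomial.X ^ 3) * h =
        Polynomial.C (3 * a) + Polynomial.C (a + 3 * b) * Polynomial.X ^ 1 +
          Polynomial.C (2 * a + b + 3 * c) * Polynomial.X ^ 2 +
          Polynomial.C (a + 2 * b + c + 3 * d) * Polynomial.X ^ 3 +
          Polynomial.C (b + 2 * c + d) * Polynomial.X ^ 4 +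
          Polynomial.C (c + 2 * d) * Polynomial.X ^ 5 + Polynomial.C d * Polynomial.X ^ 6 := by
      rw [hh]
      simp only [map_add, map_mul]
      ring
    rw [key]
    simp only [Polynomial.coeff_add, Polynomial.coeff_C_mul, Polynomial.coeff_X_pow,
      Polynomial.coeff_C]
    fin_cases j <;> simp [octaword]
  have hlast : ∀ a b c d : ZMod 4, octaword a b c d (Fin.last 7) =
      - ∑ j : Fin 7, octaword a b c d (Fin.castSucc j) := by
    decide +kernel
  constructor
  · rintro ⟨⟨f, hf⟩, hu⟩
    have hd : h ∣ (f * h) %ₘ (Polynomial.X ^ 7 - 1) := by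
      rw [Polynomial.modByMonic_eq_sub_mul_div]
      exact dvd_sub (dvd_mul_left _ _) (hdvd.mul_right _)
    obtain ⟨q, hq⟩ := hd
    have hlt : ((f * h) %ₘ (Polynomial.X ^ 7 - 1)).natDegree < 7 := by
      have := Polynomial.natDegree_modByMonic_lt (f * h) hM
        (by intro e; rw [e] at hMdeg; simp at hMdeg)
      omega
    have hq3 : q.natDegree ≤ 3 := by
      by_cases h0 : q = 0
      · simp [h0]
      · rw [hq, hmono.natDegree_mul' h0] at hlt
        omega
    refine ⟨q.coeff 0, q.coeff 1, q.coeff 2, q.coeff 3, ?_⟩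
    have hj : ∀ j : Fin 7, u (Fin.castSucc j) =
        octaword (q.coeff 0) (q.coeff 1) (q.coeff 2) (q.coeff 3) (Fin.castSucc j) := by
      intro j
      rw [hf, hq, ← hcoeff, ← cubic_eq q hq3, mul_comm]
    funext i
    refine Fin.lastCases ?_ hj i
    rw [hu, hlast]
    simp only [hj]
  · rintro ⟨a, b, c, d, rfl⟩
    refine ⟨⟨Polynomial.C a + Polynomial.C b * Polynomial.X + Polynomial.C c * Polynomial.X ^ 2 +
        Polynomial.C d * Polynomial.X ^ 3, fun j => ?_⟩, hlast a b c d⟩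
    rw [(Polynomial.modByMonic_eq_self_iff hM).2, hcoeff]
    rw [Polynomial.degree_eq_natDegree hM.ne_zero, hMdeg]
    refine Polynomial.degree_le_natDegree.trans_lt (Nat.cast_lt.2 ?_)
    refine Nat.lt_of_le_of_lt Polynomial.natDegree_mul_le ?_
    have : (Polynomial.C a + Polynomial.C b * Polynomial.X + Polynomial.C c * Polynomial.X ^ 2 +
        Polynomial.C d * Polynomial.X ^ 3).natDegree ≤ 3 := by
      compute_degree
    omega

theorem octaword_weight : ∀ a b c d : ZMod 4,
    (∃ i, ZMod.castHom (by norm_num : (2:ℕ) ∣ 4) (ZMod 2) (octaword a b c d i) ≠ 0) →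
    5 ≤ (Finset.univ.filter fun i => octaword a b c d i ≠ 0).card := by
  decide +kernel

/-- A nonzero binary vector orthogonal to the four reduced generators of the Octacode has weight
at least 4. -/
theorem parity_weight : ∀ v : Fin 8 → ZMod 2, v ≠ 0 →
    v 0 + v 1 + v 3 + v 7 = 0 → v 1 + v 2 + v 4 + v 7 = 0 →
    v 2 + v 3 + v 5 + v 7 = 0 → v 3 + v 4 + v 6 + v 7 = 0 →
    4 ≤ (Finset.univ.filter fun i => v i ≠ 0).card := by
  decide +kernel

/-- Minimum-weight facts for the Octacode and its mod-2 reduction, and the resulting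
emptiness of the disjoint-support sum `D_{2,1}`. -/
theorem stmt_3 (h : Polynomial (ZMod 4)) (hmono : h.Monic) (hdeg : h.natDegree = 3)
    (hdvd : h ∣ (Polynomial.X ^ 7 - 1))
    (hred : h.map (ZMod.castHom (by norm_num : (2:ℕ) ∣ 4) (ZMod 2)) =
      Polynomial.X ^ 3 + Polynomial.X + 1)
    (O : Submodule (ZMod 4) (Fin 8 → ZMod 4))
    (hO : ∀ c : Fin 8 → ZMod 4, c ∈ O ↔
      ((∃ f : Polynomial (ZMod 4), ∀ j : Fin 7,
          c (Fin.castSucc j) = ((f * h) %ₘ (Polynomial.X ^ 7 - 1)).coeff (j : ℕ)) ∧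
        c (Fin.last 7) = - ∑ j : Fin 7, c (Fin.castSucc j))) :
    (∀ u ∈ O, (∃ i, ZMod.castHom (by norm_num : (2:ℕ) ∣ 4) (ZMod 2) (u i) ≠ 0) →
        5 ≤ (Finset.univ.filter fun i => u i ≠ 0).card) ∧
    (∀ v : Fin 8 → ZMod 2, v ≠ 0 →
        (∀ d : Fin 8 → ZMod 2,
          (∃ c ∈ O, ∀ i, d i = ZMod.castHom (by norm_num : (2:ℕ) ∣ 4) (ZMod 2) (c i)) →
          ∑ i, d i * v i = 0) →
        4 ≤ (Finset.univ.filter fun i => v i ≠ 0).card) ∧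
    (∀ u ∈ O, (∃ i, ZMod.castHom (by norm_num : (2:ℕ) ∣ 4) (ZMod 2) (u i) ≠ 0) →
      ∀ v : Fin 8 → ZMod 2, v ≠ 0 →
        (∀ d : Fin 8 → ZMod 2,
          (∃ c ∈ O, ∀ i, d i = ZMod.castHom (by norm_num : (2:ℕ) ∣ 4) (ZMod 2) (c i)) →
          ∑ i, d i * v i = 0) →
        ∃ i, u i ≠ 0 ∧ v i ≠ 0) := by
  have hh := hensel_lift_eq h hmono hdeg hdvd hred
  have hmem : ∀ u, u ∈ O ↔ ∃ a b c d, u = octaword a b c d := fun u =>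
    (hO u).trans (mem_iff_octaword h hh hmono hdeg hdvd u)
  have hprimal : ∀ u ∈ O,
      (∃ i, ZMod.castHom (by norm_num : (2:ℕ) ∣ 4) (ZMod 2) (u i) ≠ 0) →
      5 ≤ (Finset.univ.filter fun i => u i ≠ 0).card := by
    intro u hu hne
    obtain ⟨a, b, c, d, rfl⟩ := (hmem u).1 hu
    exact octaword_weight a b c d hne
  have hdual : ∀ v : Fin 8 → ZMod 2, v ≠ 0 →
      (∀ d : Fin 8 → ZMod 2,
        (∃ c ∈ O, ∀ i, d i = ZMod.castHom (by norm_num : (2:ℕ) ∣ 4) (ZMod 2) (c i)) →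
        ∑ i, d i * v i = 0) →
      4 ≤ (Finset.univ.filter fun i => v i ≠ 0).card := by
    intro v hv hd
    have g0 := hd ![1, 1, 0, 1, 0, 0, 0, 1]
      ⟨octaword 1 0 0 0, (hmem _).2 ⟨_, _, _, _, rfl⟩, by decide +kernel⟩
    have g1 := hd ![0, 1, 1, 0, 1, 0, 0, 1]
      ⟨octaword 0 1 0 0, (hmem _).2 ⟨_, _, _, _, rfl⟩, by decide +kernel⟩
    have g2 := hd ![0, 0, 1, 1, 0, 1, 0, 1]
      ⟨octaword 0 0 1 0, (hmem _).2 ⟨_, _, _, _, rfl⟩, by decide +kernel⟩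
    have g3 := hd ![0, 0, 0, 1, 1, 0, 1, 1]
      ⟨octaword 0 0 0 1, (hmem _).2 ⟨_, _, _, _, rfl⟩, by decide +kernel⟩
    simp [Fin.sum_univ_succ] at g0 g1 g2 g3
    simp only [← add_assoc] at g0 g1 g2 g3
    exact parity_weight v hv g0 g1 g2 g3
  refine ⟨hprimal, hdual, fun u hu hne v hv hd => ?_⟩
  by_contra! hdisj
  have hd' : Disjoint (Finset.univ.filter fun i => u i ≠ 0)
      (Finset.univ.filter fun i => v i ≠ 0) := by
    rw [Finset.disjoint_filter]
    exact fun i _ hui hvi => hvi (hdisj i hui)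
  have hcard := Finset.card_le_univ
    ((Finset.univ.filter fun i => u i ≠ 0) ∪ (Finset.univ.filter fun i => v i ≠ 0))
  rw [Finset.card_union_of_disjoint hd', Fintype.card_fin] at hcard
  have h5 := hprimal u hu hne
  have h4 := hdual v hv hd
  omega
end
end

section
/- For the family C_m of lifted extended quadratic residue codes of length 24 modulo 2^m, let A_{1,1} := 2^{−12}·swe_{C_2}(x_0, z−y_0, z+y_0) ∈ ℚ[x_0,y_0,z]. Then the sum of those monomials of A_{1,1} that are divisible by x_0·y_0 equals D_{1,1} = 759·x_0^{16}·y_0^8 − 2576·x_0^{12}·y_0^{12} + 759·x_0^8·y_0^{16} − 1518·x_0^8·y_0^8·z^8. -/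
/-!
Write `C` for the lifted code modulo `4`; its reduction modulo `2` is the binary Golay code.
A coordinate of a word `c ∈ C` contributes `x`, `z - y` or `z + y` according to whether it is a
unit, `2` or `0`. Expanding the product over the coordinates gives a sum over the sets `T` of
coordinates contributing a `y`, where `T` has to avoid the unit coordinates and the sign is `-1` to
the number of entries `2` in `T` (`prod_phi`, `term_rep`).

Replacing `c` by `c + 2d` with `d ∈ C` multiplies the summand of `T` by the character
`(-1)^|T ∩ supp d|`. Hence the sum over `c` vanishes unless `T` is orthogonal to the Golay code, that
is, unless `T` is a Golay codeword (`sum_term_eq_zero`, `self_dual`); for those `T` the summand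
depends only on `c` modulo `2C`, and the factor `2^12` cancels (`aeval_swe_eq`). What is left is a
signed sum over disjoint pairs `(S, T)` of Golay codewords, where `S` is the set of unit
coordinates, and `D_{1,1}` collects the pairs with both members nonzero.

If `|S|` is `12` or `16`, then `T` is the complement of `S`. If `|S| = 8`, then `T` is the complement
or an octad disjoint from `S`; the signs form a character on the codewords disjoint from `S`, which
is nontrivial, so the signs of the octads add up to `-2` (`dp_word`). Together with the weight
distribution `759, 2576, 759` this is the formula. The signs of the complements, the nontriviality
of the character for each octad (by exhibiting a codeword of sign `-1`) and the weight
distribution are verified by running through the `4096` classes modulo `2C`, encoded as pairs of bit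
masks (`good1`, `score1` and `good2`, `score2`).

Only two codes have to be considered: modulo `2` the polynomial `x^23 - 1` has two irreducible
factors of degree `11` (`factor_cases`), and their lifts modulo `4` are unique (`lift_unique`).
-/

open MvPolynomial
open scoped Classical

noncomputable section

/-- `g` is a monic irreducible degree-11 factor of `x^23 - 1` over `ℤ/pℤ`. -/
def IsQRFactor (p : ℕ) (g : Polynomial (ZMod p)) : Prop :=
  g.Monic ∧ g.natDegree = 11 ∧ Irreducible g ∧ g ∣ (Polynomial.X ^ 23 - 1)

/-- `gm` is the (Hensel) lift of `g` to `ℤ/Nℤ` and `C` is the associated lifted extended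
cyclic quadratic residue code of length 24: the extension by an overall parity check of the
cyclic code of length 23 generated by `gm`. -/
def IsLiftedQR {p N : ℕ} (hpN : p ∣ N) (g : Polynomial (ZMod p)) (gm : Polynomial (ZMod N))
    (C : Submodule (ZMod N) (Fin 24 → ZMod N)) : Prop :=
  gm.Monic ∧ gm.natDegree = 11 ∧ gm ∣ (Polynomial.X ^ 23 - 1) ∧
    gm.map (ZMod.castHom hpN (ZMod p)) = g ∧
    ∀ c : Fin 24 → ZMod N, c ∈ C ↔
      ((∃ f : Polynomial (ZMod N), ∀ j : Fin 23,
          c (Fin.castSucc j) = ((f * gm) %ₘ (Polynomial.X ^ 23 - 1)).coeff (j : ℕ)) ∧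
        c (Fin.last 23) = - ∑ j : Fin 23, c (Fin.castSucc j))

/-- The sum of those monomials of `A` that are divisible by `X i * X j`. -/
def divPart {σ : Type*} (A : MvPolynomial σ ℚ) (i j : σ) : MvPolynomial σ ℚ :=
  ∑ d ∈ A.support.filter (fun d => d i ≠ 0 ∧ d j ≠ 0), monomial d (A.coeff d)

namespace LiftedQR

/-- Polynomials in `x_0 = X 0`, `y_0 = X 1` and `z = X 2`; below, `x` and `y` stand for `x_0`
and `y_0`. -/
abbrev Poly := MvPolynomial (Fin 3) ℚ

/-! ### The part of a polynomial divisible by two variables -/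

lemma coeff_divPart (A : Poly) (i j : Fin 3) (d : Fin 3 →₀ ℕ) :
    coeff d (divPart A i j) = if d i ≠ 0 ∧ d j ≠ 0 then coeff d A else 0 := by
  simp only [divPart, coeff_sum, coeff_monomial]
  rw [Finset.sum_ite_eq']
  simp only [Finset.mem_filter, mem_support_iff]
  by_cases h : coeff d A = 0 <;> simp [h]

/-- `divPart · 0 1` as an additive map. -/
def dp : Poly →+ Poly where
  toFun A := divPart A 0 1
  map_zero' := by ext d; simp [coeff_divPart]
  map_add' A B := by
    ext d
    simp only [coeff_divPart, coeff_add]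
    split_ifs <;> simp

lemma dp_apply (A : Poly) : dp A = divPart A 0 1 := rfl

/-- The monomial `x^a y^b z^c`. -/
def mon (a b c : ℕ) : Poly := X 0 ^ a * X 1 ^ b * X 2 ^ c

lemma dp_mon (k : ℤ) (a b c : ℕ) :
    dp ((k : Poly) * mon a b c) = if a ≠ 0 ∧ b ≠ 0 then (k : Poly) * mon a b c else 0 := by
  have h : (k : Poly) * mon a b c =
      monomial (Finsupp.single 0 a + Finsupp.single 1 b + Finsupp.single 2 c) (k : ℚ) := by
    rw [show (k : Poly) = C (k : ℚ) by simp, mon]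
    simp only [X_pow_eq_monomial, monomial_mul, C_mul_monomial, mul_one]
  ext d
  rw [h]
  simp only [dp, AddMonoidHom.coe_mk, ZeroHom.coe_mk, coeff_divPart, coeff_monomial]
  by_cases hd : Finsupp.single 0 a + Finsupp.single 1 b + Finsupp.single 2 c = d
  · subst hd
    simp
    split_ifs <;> simp
  · simp only [hd, if_false, ite_self]
    split_ifs <;> simp [coeff_monomial, hd]

/-! ### Expanding the substituted weight enumerator -/

/-- The image of the variable attached to the residue `v` under the substitution
`(x, z - y, z + y)`. -/
def phi (v : ZMod 4) : Poly :=
  if v = 0 then X 2 + X 1 else if v = 2 then X 2 - X 1 else X 0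

/-- The sign of `y` in `phi v`, and `0` at units. -/
def bs (v : ZMod 4) : ℤ := if v = 0 then 1 else if v = 2 then -1 else 0

/-- The part of `phi v` free of `y`. -/
def al (v : ZMod 4) : Poly := if v = 0 ∨ v = 2 then X 2 else X 0

/-- The nontrivial character of `ℤ/4ℤ` that is trivial on `2ℤ/4ℤ`. -/
def sgn (v : ZMod 4) : ℤ := if v = 0 ∨ v = 2 then 1 else -1

lemma phi_eq (v : ZMod 4) : phi v = (bs v : Poly) * X 1 + al v := by
  revert v
  have h1 : phi 0 = (bs 0 : Poly) * X 1 + al 0 := by simp [phi, bs, al]; ring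
  have h2 : phi 1 = (bs 1 : Poly) * X 1 + al 1 := by
    simp [phi, bs, al, show (1 : ZMod 4) ≠ 2 by decide, show (1 : ZMod 4) ≠ 0 by decide]
  have h3 : phi 2 = (bs 2 : Poly) * X 1 + al 2 := by
    simp [phi, bs, al, show (2 : ZMod 4) ≠ 0 by decide]; ring
  have h4 : phi 3 = (bs 3 : Poly) * X 1 + al 3 := by
    simp [phi, bs, al, show (3 : ZMod 4) ≠ 2 by decide, show (3 : ZMod 4) ≠ 0 by decide]
  intro v
  fin_cases v
  exacts [h1, h2, h3, h4]

lemma phi_prod (v : ZMod 4) :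
    phi v = (if v ≠ 0 ∧ padicValNat 2 v.val = 0 then X 0 else 1) *
      (if v ≠ 0 ∧ padicValNat 2 v.val = 1 then X 2 - X 1 else 1) *
      (if v = 0 then X 2 + X 1 else 1) := by
  have h1 : padicValNat 2 (1 : ZMod 4).val = 0 := by
    rw [show (1 : ZMod 4).val = 1 from rfl]; simp
  have h2 : padicValNat 2 (2 : ZMod 4).val = 1 := by
    rw [show (2 : ZMod 4).val = 2 from rfl]; simp
  have h3 : padicValNat 2 (3 : ZMod 4).val = 0 := by
    rw [show (3 : ZMod 4).val = 3 from rfl]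
    exact padicValNat.eq_zero_of_not_dvd (by norm_num)
  have e0 : (1 : ZMod 4) ≠ 0 := by decide
  have e1 : (1 : ZMod 4) ≠ 2 := by decide
  have e2 : (2 : ZMod 4) ≠ 0 := by decide
  have e3 : (3 : ZMod 4) ≠ 0 := by decide
  have e4 : (3 : ZMod 4) ≠ 2 := by decide
  have hv : v = 0 ∨ v = 1 ∨ v = 2 ∨ v = 3 := by revert v; decide
  rcases hv with rfl | rfl | rfl | rfl
  · simp [phi]
  · simp [phi, h1, e0, e1]
  · simp [phi, h2, e2]
  · simp [phi, h3, e3, e4]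

lemma aeval_swe (C : Submodule (ZMod 4) (Fin 24 → ZMod 4)) :
    aeval (![X 0, X 2 - X 1, X 2 + X 1] : Fin 3 → Poly) (swe 2 2 C) =
      ∑ c : Fin 24 → ZMod 4, if c ∈ C then ∏ j, phi (c j) else 0 := by
  rw [swe, map_sum]
  refine Finset.sum_congr rfl fun c _ => ?_
  split_ifs with h
  · simp only [phi_prod, Finset.prod_mul_distrib, ← Finset.prod_filter, Finset.prod_const]
    simp [Fin.prod_univ_two]
  · simp

/-- The summand indexed by `T` in the expansion of `∏ j, phi (c j)`: `T` is the set of coordinates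
contributing a `y`. -/
def term (c : Fin 24 → ZMod 4) (T : Finset (Fin 24)) : Poly :=
  (∏ j ∈ T, ((bs (c j) : Poly) * X 1)) * ∏ j ∈ Finset.univ \ T, al (c j)

lemma prod_phi (c : Fin 24 → ZMod 4) : ∏ j, phi (c j) = ∑ T, term c T := by
  simp only [phi_eq, Finset.prod_add, Finset.powerset_univ, term]

/-- The character of `(ℤ/4ℤ)^24` attached to `T`, evaluated at `d`: the parity of the number of
unit coordinates of `d` in `T`. -/
def chi (d : Fin 24 → ZMod 4) (T : Finset (Fin 24)) : ℤ := ∏ j ∈ T, sgn (d j)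

lemma term_add_two (c d : Fin 24 → ZMod 4) (T : Finset (Fin 24)) :
    term (c + d + d) T = (chi d T : Poly) * term c T := by
  have h1 : ∀ v w : ZMod 4, bs (v + w + w) = sgn w * bs v := by decide
  have h2 : ∀ v w : ZMod 4, (v + w + w = 0 ∨ v + w + w = 2) ↔ (v = 0 ∨ v = 2) := by decide
  simp only [term, chi, Pi.add_apply, h1, al, h2, Int.cast_prod, ← mul_assoc,
    ← Finset.prod_mul_distrib, Int.cast_mul]

lemma chi_sq (d : Fin 24 → ZMod 4) (T : Finset (Fin 24)) : chi d T = 1 ∨ chi d T = -1 := by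
  have : ∀ v : ZMod 4, sgn v = 1 ∨ sgn v = -1 := by decide
  unfold chi
  induction T using Finset.induction_on with
  | empty => simp
  | insert a s ha ih =>
    rw [Finset.prod_insert ha]
    rcases this (d a) with h | h <;> rcases ih with h' | h' <;> simp [h, h']

/-- Only the sets `T` on which all characters `chi d`, `d ∈ C`, are trivial contribute: otherwise
the translation by `2d` changes the sign of the sum. -/
lemma sum_term_eq_zero (C : Submodule (ZMod 4) (Fin 24 → ZMod 4)) (d : Fin 24 → ZMod 4)
    (hd : d ∈ C) (T : Finset (Fin 24)) (hT : chi d T ≠ 1) :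
    (∑ c : Fin 24 → ZMod 4, if c ∈ C then term c T else 0) = 0 := by
  have h := Equiv.sum_comp (Equiv.addRight (d + d)) (fun c => if c ∈ C then term c T else 0)
  have hm : ∀ c, c + d + d ∈ C ↔ c ∈ C := fun c => by
    rw [add_assoc, Submodule.add_mem_iff_left _ (C.add_mem hd hd)]
  simp only [Equiv.coe_addRight, ← add_assoc, hm, term_add_two,
    (chi_sq d T).resolve_left hT] at h
  have h' : -(∑ c : Fin 24 → ZMod 4, if c ∈ C then term c T else 0) =
      ∑ c : Fin 24 → ZMod 4, if c ∈ C then term c T else 0 := by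
    rw [← Finset.sum_neg_distrib]
    rw [← h]
    refine Finset.sum_congr rfl fun c _ => ?_
    split_ifs <;> simp
  exact self_eq_neg.mp h'.symm

/-! ### Bit masks for words over `ℤ/4ℤ` -/

/-- The word over `ℤ/4ℤ` with entry `o_j + 2 h_j` at `j`, where `o_j`, `h_j` are the binary digits
of the two masks `p = (o, h)`. -/
def rep (p : ℕ × ℕ) (j : Fin 24) : ZMod 4 :=
  (if p.1.testBit j then 1 else 0) + (if p.2.testBit j then 2 else 0)

/-- The set of positions of the binary digits `1` of `n` below `24`. -/
def supp (n : ℕ) : Finset (Fin 24) := Finset.univ.filter fun j => n.testBit j = true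

/-- Addition of words over `ℤ/4ℤ` in terms of masks. The raw `Nat` functions keep evaluation in
the kernel short. -/
def addMask (p q : ℕ × ℕ) : ℕ × ℕ :=
  (Nat.xor p.1 q.1, Nat.xor (Nat.xor p.2 q.2) (Nat.land p.1 q.1))

/-- All sums of `p` and a subset of the given words. -/
def span : List (ℕ × ℕ) → ℕ × ℕ → List (ℕ × ℕ)
  | [], p => [p]
  | r :: rs, p => span rs p ++ span rs (addMask p r)

/-- The number of binary digits `1` of `n` below position `24`. -/
def pop (n : ℕ) : ℕ :=
  Nat.rec 0 (fun k ih => Nat.add ih (Nat.mod (Nat.shiftRight n k) 2)) 24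

lemma rep_addMask (p q : ℕ × ℕ) : rep (addMask p q) = rep p + rep q := by
  funext j
  have h1 : (Nat.xor p.1 q.1).testBit j = (p.1.testBit j ^^ q.1.testBit j) := Nat.testBit_xor ..
  have h2 : (Nat.xor (Nat.xor p.2 q.2) (Nat.land p.1 q.1)).testBit j =
      ((p.2.testBit j ^^ q.2.testBit j) ^^ (p.1.testBit j && q.1.testBit j)) := by
    have h3 : (Nat.xor p.2 q.2).testBit j = (p.2.testBit j ^^ q.2.testBit j) :=
      Nat.testBit_xor ..
    have h4 : (Nat.land p.1 q.1).testBit j = (p.1.testBit j && q.1.testBit j) :=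
      Nat.testBit_and ..
    rw [← h3, ← h4]
    exact Nat.testBit_xor ..
  simp only [rep, addMask, Pi.add_apply, h1, h2]
  generalize p.1.testBit j = a
  generalize p.2.testBit j = b
  generalize q.1.testBit j = c
  generalize q.2.testBit j = d
  revert a b c d
  decide

lemma supp_xor (a b : ℕ) : supp (Nat.xor a b) = symmDiff (supp a) (supp b) := by
  ext j
  have h1 : (Nat.xor a b).testBit j = (a.testBit j ^^ b.testBit j) := Nat.testBit_xor ..
  simp only [supp, Finset.mem_filter, Finset.mem_univ, true_and, h1, Finset.mem_symmDiff]
  cases a.testBit j <;> cases b.testBit j <;> simp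

lemma supp_land (a b : ℕ) : supp (Nat.land a b) = supp a ∩ supp b := by
  ext j
  simp [supp]

lemma pop_eq (n : ℕ) : pop n = (supp n).card := by
  have h : ∀ m : ℕ, (Nat.rec 0 (fun k ih => Nat.add ih (Nat.mod (Nat.shiftRight n k) 2)) m : ℕ) =
      ∑ k ∈ Finset.range m, if n.testBit k then 1 else 0 := by
    intro m
    induction m with
    | zero => rfl
    | succ k ih =>
      rw [Finset.sum_range_succ, ← ih]
      have : Nat.mod (Nat.shiftRight n k) 2 = if n.testBit k then 1 else 0 := by
        have h2 : Nat.mod (Nat.shiftRight n k) 2 = n / 2 ^ k % 2 := by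
          rw [← Nat.shiftRight_eq_div_pow]; rfl
        rw [h2, Nat.testBit_eq_decide_div_mod_eq]
        rcases Nat.mod_two_eq_zero_or_one (n / 2 ^ k) with h | h <;> simp [h]
      rw [← this]
      rfl
  rw [pop, h 24, supp, Finset.card_filter, Finset.sum_range]

lemma rep_even_iff (p : ℕ × ℕ) (j : Fin 24) : (rep p j = 0 ∨ rep p j = 2) ↔ j ∉ supp p.1 := by
  simp only [rep, supp, Finset.mem_filter, Finset.mem_univ, true_and]
  generalize p.1.testBit j = a
  generalize p.2.testBit j = b
  revert a b
  decide

lemma bs_rep (p : ℕ × ℕ) (j : Fin 24) :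
    bs (rep p j) = if j ∈ supp p.1 then 0 else if j ∈ supp p.2 then -1 else 1 := by
  simp only [rep, supp, Finset.mem_filter, Finset.mem_univ, true_and]
  generalize p.1.testBit j = a
  generalize p.2.testBit j = b
  revert a b
  decide

lemma chi_rep (p : ℕ × ℕ) (T : Finset (Fin 24)) :
    chi (rep p) T = (-1) ^ (T ∩ supp p.1).card := by
  have : ∀ j, sgn (rep p j) = if j ∈ supp p.1 then -1 else 1 := fun j => by
    rw [sgn]
    simp only [rep_even_iff]
    split_ifs <;> simp_all
  simp only [chi, this, ← Finset.prod_filter, Finset.prod_const, Finset.filter_mem_eq_inter]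

lemma chi_eq_one_iff (p : ℕ × ℕ) (T : Finset (Fin 24)) :
    chi (rep p) T = 1 ↔ Even (T ∩ supp p.1).card := by
  rw [chi_rep, neg_one_pow_eq_one_iff_even (by norm_num)]

/-- The sign with which a set `T` of even coordinates occurs in the expansion attached to a word
whose second mask has support `H`: each entry `2` in `T` contributes `-1`. -/
def sig (H T : Finset (Fin 24)) : ℤ := (-1) ^ (T ∩ H).card

lemma term_rep (p : ℕ × ℕ) (T : Finset (Fin 24)) :
    term (rep p) T = if Disjoint (supp p.1) T then
      (sig (supp p.2) T : Poly) * mon (supp p.1).card T.card (24 - (supp p.1).card - T.card)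
      else 0 := by
  split_ifs with h
  · have h1 : ∏ j ∈ T, bs (rep p j) = sig (supp p.2) T := by
      rw [sig, ← Finset.filter_mem_eq_inter, ← Finset.prod_const, Finset.prod_filter]
      refine Finset.prod_congr rfl fun j hj => ?_
      rw [bs_rep, if_neg (Finset.disjoint_right.mp h hj)]
    have h2 : ∏ j ∈ Finset.univ \ T, al (rep p j) =
        X 0 ^ (supp p.1).card * X 2 ^ (24 - (supp p.1).card - T.card) := by
      simp only [al, rep_even_iff]
      rw [Finset.prod_ite, Finset.prod_const, Finset.prod_const, mul_comm]
      have e1 : (Finset.univ \ T).filter (fun j => ¬ j ∉ supp p.1) = supp p.1 := by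
        ext j
        simp only [Finset.mem_filter, Finset.mem_sdiff, Finset.mem_univ, true_and, not_not]
        exact ⟨fun h => h.2, fun hj => ⟨Finset.disjoint_left.mp h hj, hj⟩⟩
      have e2 : (Finset.univ \ T).filter (fun j => j ∉ supp p.1) =
          (supp p.1 ∪ T)ᶜ := by
        ext j
        simp only [Finset.mem_filter, Finset.mem_sdiff, Finset.mem_univ, true_and,
          Finset.mem_compl, Finset.mem_union]
        tauto
      rw [e1, e2, Finset.card_compl, Finset.card_union_of_disjoint h, Fintype.card_fin,
        Nat.sub_sub]
    rw [term, Finset.prod_mul_distrib, Finset.prod_const, h2, mon, ← Int.cast_prod, h1]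
    ring
  · rw [Finset.not_disjoint_iff] at h
    obtain ⟨j, hj, hjT⟩ := h
    rw [term, Finset.prod_eq_zero hjT, zero_mul]
    rw [bs_rep, if_pos hj]
    simp

lemma prod_symmDiff {e : Fin 24 → ℤ} (he : ∀ j, e j * e j = 1) (T U : Finset (Fin 24)) :
    ∏ j ∈ symmDiff T U, e j = (∏ j ∈ T, e j) * ∏ j ∈ U, e j := by
  have h : ∀ V : Finset (Fin 24), ∏ j ∈ V, e j = ∏ j, if j ∈ V then e j else 1 := fun V => by
    simp [Finset.prod_ite_mem]
  rw [h, h T, h U, ← Finset.prod_mul_distrib]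
  refine Finset.prod_congr rfl fun j _ => ?_
  by_cases h1 : j ∈ T <;> by_cases h2 : j ∈ U <;> simp [Finset.mem_symmDiff, h1, h2, he]

lemma chi_symmDiff (d : Fin 24 → ZMod 4) (T U : Finset (Fin 24)) :
    chi d (symmDiff T U) = chi d T * chi d U :=
  prod_symmDiff (fun j => (by decide : ∀ v : ZMod 4, sgn v * sgn v = 1) (d j)) T U

lemma sig_symmDiff (H T U : Finset (Fin 24)) :
    sig H (symmDiff T U) = sig H T * sig H U := by
  have h : ∀ V, sig H V = ∏ j ∈ V, if j ∈ H then -1 else 1 := fun V => by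
    rw [sig, ← Finset.filter_mem_eq_inter, ← Finset.prod_const, Finset.prod_filter]
  rw [h, h T, h U]
  exact prod_symmDiff (fun j => by split_ifs <;> simp) T U

/-! ### The contribution of a single word -/

/-- The contribution to `D_{1,1}` of a class of words modulo `2C` with `w` unit coordinates. -/
def val (w : ℕ) : Poly :=
  if w = 8 then mon 8 16 0 - 2 * mon 8 8 8 else if w = 12 then -mon 12 12 0
  else if w = 16 then mon 16 8 0 else 0

lemma dp_sum_term (D : Finset (Finset (Fin 24))) (p : ℕ × ℕ) :
    dp (∑ T ∈ D, term (rep p) T) =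
      ∑ T ∈ D.filter (fun T => Disjoint (supp p.1) T ∧ (supp p.1).card ≠ 0 ∧ T.card ≠ 0),
        (sig (supp p.2) T : Poly) *
          mon (supp p.1).card T.card (24 - (supp p.1).card - T.card) := by
  rw [map_sum, Finset.sum_filter]
  refine Finset.sum_congr rfl fun T _ => ?_
  rw [term_rep]
  by_cases h : Disjoint (supp p.1) T
  · simp only [h, if_true, dp_mon, true_and]
  · simp [h]

/-- In a binary linear code `D` containing the all-one word and with all weights among `0`, `8`,
`12`, `16`, `24`, a word of weight `12` or `16` is disjoint only from `0` and its complement. For a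
word `S` of weight `8`, the signs form a nontrivial character on the words disjoint from `S`, so
they add up to `0`; removing `0` and the complement leaves `-2` for the words of weight `8`. -/
lemma dp_word (D : Finset (Finset (Fin 24)))
    (hD : ∀ T ∈ D, ∀ U ∈ D, symmDiff T U ∈ D) (huniv : Finset.univ ∈ D)
    (hw : ∀ T ∈ D, T.card = 0 ∨ T.card = 8 ∨ T.card = 12 ∨ T.card = 16 ∨ T.card = 24)
    (p : ℕ × ℕ) (hS : supp p.1 ∈ D)
    (h12 : (supp p.1).card = 12 → sig (supp p.2) (supp p.1)ᶜ = -1)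
    (h16 : (supp p.1).card = 16 → sig (supp p.2) (supp p.1)ᶜ = 1)
    (h8 : (supp p.1).card = 8 → sig (supp p.2) (supp p.1)ᶜ = 1 ∧
      ∃ T ∈ D, Disjoint (supp p.1) T ∧ sig (supp p.2) T = -1) :
    dp (∑ T ∈ D, term (rep p) T) = val (supp p.1).card := by
  rw [dp_sum_term]
  generalize supp p.1 = S at *
  generalize supp p.2 = H at *
  have hcompl : Sᶜ ∈ D := by
    have := hD S hS _ huniv
    rwa [← Finset.top_eq_univ, symmDiff_top] at this
  have hcard : Sᶜ.card = 24 - S.card := by rw [Finset.card_compl, Fintype.card_fin]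
  have hle : ∀ T, Disjoint S T → S.card + T.card ≤ 24 := fun T h => by
    rw [← Finset.card_union_of_disjoint h]
    exact (Finset.card_le_univ _).trans_eq (Fintype.card_fin 24)
  have heq : ∀ T, Disjoint S T → S.card + T.card = 24 → T = Sᶜ := fun T h h' =>
    Finset.eq_of_subset_of_card_le
      (fun j hj => Finset.mem_compl.mpr (Finset.disjoint_right.mp h hj)) (by omega)
  have hsum : ∀ T ∈ D, Disjoint S T → S.card + T.card = 0 ∨ S.card + T.card = 8 ∨
      S.card + T.card = 12 ∨ S.card + T.card = 16 ∨ S.card + T.card = 24 := fun T hT h => by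
    have := hw _ (hD S hS T hT)
    rwa [h.symmDiff_eq_sup, Finset.sup_eq_union, Finset.card_union_of_disjoint h] at this
  -- When the complement is the only nonzero word disjoint from `S`, one term is left.
  have hone : S.card = 12 ∨ S.card = 16 →
      D.filter (fun T => Disjoint S T ∧ S.card ≠ 0 ∧ T.card ≠ 0) = {Sᶜ} := by
    intro h
    ext T
    simp only [Finset.mem_filter, Finset.mem_singleton]
    constructor
    · rintro ⟨hT, hd, -, h0⟩
      have := hw T hT
      have := hsum T hT hd
      exact heq T hd (by omega)
    · rintro rfl
      exact ⟨hcompl, disjoint_compl_right, by omega, by omega⟩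
  rcases hw S hS with h | h | h | h | h
  · simp [h, val]
  · obtain ⟨hc, T₀, hT₀, hd₀, hs₀⟩ := h8 h
    have hempty : ∅ ∈ D := by
      have := hD _ huniv _ huniv
      rwa [symmDiff_self] at this
    have hzero : ∑ T ∈ D.filter (fun T => Disjoint S T), (sig H T : Poly) = 0 := by
      have hinv : ∑ T ∈ D.filter (fun T => Disjoint S T), (sig H T : Poly) =
          ∑ T ∈ D.filter (fun T => Disjoint S T), -(sig H T : Poly) := by
        have hmem : ∀ T ∈ D.filter (fun T => Disjoint S T),
            symmDiff T T₀ ∈ D.filter (fun T => Disjoint S T) := fun T hT => by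
          rw [Finset.mem_filter] at hT ⊢
          refine ⟨hD _ hT.1 _ hT₀, ?_⟩
          exact Disjoint.mono_right symmDiff_le_sup (disjoint_sup_right.mpr ⟨hT.2, hd₀⟩)
        refine Finset.sum_nbij' (fun T => symmDiff T T₀) (fun T => symmDiff T T₀) hmem hmem ?_ ?_ ?_
        · intro T _; simp
        · intro T _; simp
        · intro T _
          rw [sig_symmDiff, hs₀]
          simp
      rw [Finset.sum_neg_distrib] at hinv
      exact self_eq_neg.mp hinv
    rw [← Finset.filter_filter, Finset.sum_filter]
    have hpt : ∀ T ∈ D.filter (fun T => Disjoint S T),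
        (if S.card ≠ 0 ∧ T.card ≠ 0 then
          (sig H T : Poly) * mon S.card T.card (24 - S.card - T.card) else 0) =
        (sig H T : Poly) * mon 8 8 8 + (if T = Sᶜ then mon 8 16 0 - mon 8 8 8 else 0) +
          (if T = ∅ then - mon 8 8 8 else 0) := by
      intro T hT
      rw [Finset.mem_filter] at hT
      have hcne : Sᶜ ≠ ∅ := by
        rw [← Finset.nonempty_iff_ne_empty, ← Finset.card_pos]; omega
      by_cases h0 : T = ∅
      · subst h0
        rw [if_neg hcne.symm]
        simp [sig]
      · have h0' : T.card ≠ 0 := by simpa using h0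
        by_cases h1 : T = Sᶜ
        · subst h1
          have h16 : Sᶜ.card = 16 := by omega
          simp [h, h16, hc, h0]
        · have h2 := hw T hT.1
          have h3 := hsum T hT.1 hT.2
          have h4 : S.card + T.card ≠ 24 := fun h' => h1 (heq T hT.2 h')
          have h5 : T.card = 8 := by omega
          simp [h, h5, h0, h1]
    rw [Finset.sum_congr rfl hpt, Finset.sum_add_distrib, Finset.sum_add_distrib,
      ← Finset.sum_mul, hzero, Finset.sum_ite_eq', Finset.sum_ite_eq', if_pos, if_pos, h]
    · simp only [val, if_true]; ring
    · simp [hempty]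
    · simp [hcompl, disjoint_compl_right]
  · rw [hone (Or.inl h), Finset.sum_singleton, h12 h, h, show Sᶜ.card = 12 by omega]
    simp [val]
  · rw [hone (Or.inr h), Finset.sum_singleton, h16 h, h, show Sᶜ.card = 8 by omega]
    simp [val]
  · rw [Finset.sum_eq_zero, h]
    · simp [val]
    · intro T hT
      rw [Finset.mem_filter] at hT
      have := hle T hT.2.1
      have := hT.2.2.2
      omega

/-! ### Enumerating the code -/

/-- A sum over all `ℤ/4ℤ`-combinations of `n` words reduces to the combinations with
coefficients `0`, `1` if the summand is invariant under adding twice a generator. -/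
lemma sum_span {n : ℕ} (R : Fin n → ℕ × ℕ) (F : (Fin 24 → ZMod 4) → Poly)
    (hF : ∀ i c, F (c + rep (R i) + rep (R i)) = F c) (p : ℕ × ℕ) :
    ∑ u : Fin n → ZMod 4, F (rep p + ∑ i, u i • rep (R i)) =
      2 ^ n * ((span (List.ofFn R) p).map fun q => F (rep q)).sum := by
  induction n generalizing p with
  | zero => simp [span]
  | succ n ih =>
    have sum4 : ∀ f : ZMod 4 → Poly, ∑ v, f v = f 0 + f 1 + f 2 + f 3 := Fin.sum_univ_four
    rw [← (Fin.consEquiv (fun _ => ZMod 4)).sum_comp, Fintype.sum_prod_type, sum4]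
    simp only [Fin.consEquiv_apply, Fin.sum_univ_succ, Fin.cons_zero, Fin.cons_succ]
    have e0 : ∀ u : Fin n → ZMod 4,
        F (rep p + ((0 : ZMod 4) • rep (R 0) + ∑ i, u i • rep (R i.succ))) =
          F (rep p + ∑ i, u i • rep (R i.succ)) := fun u => by
      rw [zero_smul, zero_add]
    have e1 : ∀ u : Fin n → ZMod 4,
        F (rep p + ((1 : ZMod 4) • rep (R 0) + ∑ i, u i • rep (R i.succ))) =
          F (rep (addMask p (R 0)) + ∑ i, u i • rep (R i.succ)) := fun u => by
      rw [one_smul, rep_addMask, add_assoc]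
    have e2 : ∀ u : Fin n → ZMod 4,
        F (rep p + ((2 : ZMod 4) • rep (R 0) + ∑ i, u i • rep (R i.succ))) =
          F (rep p + ∑ i, u i • rep (R i.succ)) := fun u => by
      rw [← hF 0 (rep p + ∑ i, u i • rep (R i.succ)), two_smul]
      congr 1; abel
    have e3 : ∀ u : Fin n → ZMod 4,
        F (rep p + ((3 : ZMod 4) • rep (R 0) + ∑ i, u i • rep (R i.succ))) =
          F (rep (addMask p (R 0)) + ∑ i, u i • rep (R i.succ)) := fun u => by
      rw [← hF 0 (rep (addMask p (R 0)) + ∑ i, u i • rep (R i.succ)), rep_addMask,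
        show (3 : ZMod 4) = 1 + 1 + 1 by decide, add_smul, add_smul, one_smul]
      congr 1; abel
    simp only [e0, e1, e2, e3]
    rw [ih (fun i => R i.succ) (fun i => hF i.succ), ih (fun i => R i.succ) (fun i => hF i.succ),
      List.ofFn_succ, span, List.map_append, List.sum_append]
    ring

/-- The sets on which the characters of all generators are trivial: the dual of the residue
code. -/
def dual (R : Fin 12 → ℕ × ℕ) : Finset (Finset (Fin 24)) :=
  Finset.univ.filter fun T => ∀ i, chi (rep (R i)) T = 1

lemma mem_dual {R : Fin 12 → ℕ × ℕ} {T : Finset (Fin 24)} :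
    T ∈ dual R ↔ ∀ i, chi (rep (R i)) T = 1 := by simp [dual]

lemma dual_symmDiff {R : Fin 12 → ℕ × ℕ} (T : Finset (Fin 24)) (hT : T ∈ dual R)
    (U : Finset (Fin 24)) (hU : U ∈ dual R) : symmDiff T U ∈ dual R := by
  rw [mem_dual] at *
  intro i
  rw [chi_symmDiff, hT, hU, one_mul]

lemma supp_mem_dual {R : Fin 12 → ℕ × ℕ} {n : ℕ}
    (h : ∀ i, (pop (Nat.land n (R i).1)) % 2 = 0) : supp n ∈ dual R := by
  rw [mem_dual]
  intro i
  rw [chi_eq_one_iff, ← supp_land, ← pop_eq, Nat.even_iff, h]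

lemma supp_span_mem_dual {R : Fin 12 → ℕ × ℕ} (rs : List (ℕ × ℕ))
    (hrs : ∀ r ∈ rs, supp r.1 ∈ dual R) (p : ℕ × ℕ) (hp : supp p.1 ∈ dual R) :
    ∀ q ∈ span rs p, supp q.1 ∈ dual R := by
  induction rs generalizing p with
  | nil => simpa [span] using hp
  | cons r rs ih =>
    intro q hq
    rw [span, List.mem_append] at hq
    rcases hq with hq | hq
    · exact ih (fun r hr => hrs r (List.mem_cons_of_mem _ hr)) p hp q hq
    · refine ih (fun r hr => hrs r (List.mem_cons_of_mem _ hr)) _ ?_ q hq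
      rw [addMask, supp_xor]
      exact dual_symmDiff _ hp _ (hrs r List.mem_cons_self)

/-- The indicator vector of a set over `ℤ/2ℤ`. -/
def ind (T : Finset (Fin 24)) (j : Fin 24) : ZMod 2 := if j ∈ T then 1 else 0

lemma exists_span {n : ℕ} (R : Fin n → ℕ × ℕ) (b : Fin n → ZMod 2) (p : ℕ × ℕ) :
    ∃ q ∈ span (List.ofFn R) p, ind (supp q.1) = ind (supp p.1) + ∑ i, b i • ind (supp (R i).1) := by
  induction n generalizing p with
  | zero => exact ⟨p, by simp [span], by simp⟩
  | succ n ih =>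
    rw [List.ofFn_succ, span, Fin.sum_univ_succ]
    have hb : b 0 = 0 ∨ b 0 = 1 := by generalize b 0 = v; revert v; decide
    rcases hb with hb | hb
    · obtain ⟨q, hq, h⟩ := ih (fun i => R i.succ) (fun i => b i.succ) p
      exact ⟨q, List.mem_append_left _ hq, by rw [h, hb, zero_smul, zero_add]⟩
    · obtain ⟨q, hq, h⟩ := ih (fun i => R i.succ) (fun i => b i.succ) (addMask p (R 0))
      refine ⟨q, List.mem_append_right _ hq, ?_⟩
      rw [h, hb, one_smul, ← add_assoc, addMask, supp_xor]
      congr 1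
      funext j
      simp only [ind, Finset.mem_symmDiff, Pi.add_apply]
      by_cases h1 : j ∈ supp p.1 <;> by_cases h2 : j ∈ supp (R 0).1 <;> simp [h1, h2]
      exact (by decide : (0 : ZMod 2) = 1 + 1)

/-- A self-orthogonal binary code of length `24` with `12` independent generators is its own
dual, by counting dimensions. -/
lemma self_dual (M : Matrix (Fin 12) (Fin 24) (ZMod 2)) (K : Matrix (Fin 24) (Fin 12) (ZMod 2))
    (hK : M * K = 1) (hM : M * M.transpose = 0) (t : Fin 24 → ZMod 2)
    (ht : M.mulVec t = 0) : ∃ b : Fin 12 → ZMod 2, t = ∑ i, b i • M i := by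
  have hsurj : Function.Surjective M.mulVecLin := fun x =>
    ⟨K.mulVec x, by simp [Matrix.mulVec_mulVec, hK]⟩
  have hinj : Function.Injective M.transpose.mulVecLin := by
    refine Function.LeftInverse.injective (g := K.transpose.mulVec) fun x => ?_
    rw [Matrix.mulVecLin_apply, Matrix.mulVec_mulVec, ← Matrix.transpose_mul, hK]
    simp
  have hle : LinearMap.range M.transpose.mulVecLin ≤ LinearMap.ker M.mulVecLin := by
    rintro _ ⟨b, rfl⟩
    rw [LinearMap.mem_ker, Matrix.mulVecLin_apply, Matrix.mulVecLin_apply, Matrix.mulVec_mulVec, hM,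
      Matrix.zero_mulVec]
  have h1 := LinearMap.finrank_range_of_inj hinj
  have h2 := M.mulVecLin.finrank_range_add_finrank_ker
  rw [LinearMap.range_eq_top.mpr hsurj, finrank_top] at h2
  simp only [Module.finrank_fin_fun] at h1 h2
  have heq := Submodule.eq_of_le_of_finrank_eq hle (by omega)
  have : t ∈ LinearMap.ker M.mulVecLin := by simpa using ht
  rw [← heq] at this
  obtain ⟨b, hb⟩ := this
  refine ⟨b, ?_⟩
  rw [← hb, Matrix.mulVecLin_apply, Matrix.mulVec_transpose, Matrix.vecMul_eq_sum]

lemma cast_rep (p : ℕ × ℕ) (j : Fin 24) :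
    ZMod.castHom (by norm_num : 2 ∣ 4) (ZMod 2) (rep p j) = ind (supp p.1) j := by
  simp only [rep, ind, supp, Finset.mem_filter, Finset.mem_univ, true_and]
  generalize p.1.testBit j = a
  generalize p.2.testBit j = b
  revert a b
  decide

lemma sum_ind_mul (T U : Finset (Fin 24)) : ∑ j, ind T j * ind U j = ((U ∩ T).card : ZMod 2) := by
  simp only [ind, mul_ite, mul_one, mul_zero, ← ite_and]
  rw [Finset.sum_boole]
  congr 2
  ext j
  simp

/-- The elements of the dual are the supports of the words found by `span`. -/
lemma exists_of_mem_dual (R : Fin 12 → ℕ × ℕ) (K : Matrix (Fin 24) (Fin 12) (ZMod 4))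
    (hK : (Matrix.of fun i => rep (R i)) * K = 1)
    (hR : ∀ i, supp (R i).1 ∈ dual R) (T : Finset (Fin 24)) (hT : T ∈ dual R) :
    ∃ q ∈ span (List.ofFn R) (0, 0), T = supp q.1 := by
  let f := ZMod.castHom (by norm_num : 2 ∣ 4) (ZMod 2)
  let M : Matrix (Fin 12) (Fin 24) (ZMod 2) := Matrix.of fun i => ind (supp (R i).1)
  have hM : (Matrix.of fun i => rep (R i)).map f = M := by
    ext i j
    exact cast_rep (R i) j
  have hMK : M * K.map f = 1 := by
    rw [← hM, ← Matrix.map_mul, hK, Matrix.map_one f (map_zero f) (map_one f)]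
  have hzero : ∀ U ∈ dual R, M.mulVec (ind U) = 0 := by
    intro U hU
    funext i
    have h := (chi_eq_one_iff _ _).mp (mem_dual.mp hU i)
    change ∑ j, ind (supp (R i).1) j * ind U j = 0
    rw [sum_ind_mul, ZMod.natCast_eq_zero_iff_even]
    exact h
  have hMM : M * M.transpose = 0 := by
    ext i i'
    exact congrFun (hzero _ (hR i')) i
  obtain ⟨b, hb⟩ := self_dual M _ hMK hMM _ (hzero T hT)
  obtain ⟨q, hq, h⟩ := exists_span R b (0, 0)
  refine ⟨q, hq, ?_⟩
  have h0 : ind (supp 0) = 0 := by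
    funext j; simp [ind, supp]
  rw [h0, zero_add] at h
  have h' : ind T = ind (supp q.1) := hb.trans h.symm
  ext j
  have := congrFun h' j
  simp only [ind] at this
  split_ifs at this <;> simp_all

/-! ### The finite checks -/

/-- The test applied to a word: its number of units is `0`, `8`, `12`, `16` or `24`; for
`8`, `12` and `16` the parity of the number of entries `2` is the one forced by the Euclidean norm
being divisible by `8`; and if there are `8` units, then some word of the list `W` is disjoint from them and meets the entries
`2` in an odd number of places. -/
def good (W : List ℕ) (p : ℕ × ℕ) : Bool :=
  let w := pop p.1
  let e := Nat.mod (pop (Nat.land p.2 (Nat.xor p.1 16777215))) 2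
  (Nat.beq w 0 || Nat.beq w 24 || (Nat.beq w 16 && Nat.beq e 0) || (Nat.beq w 12 && Nat.beq e 1) ||
    (Nat.beq w 8 && Nat.beq e 0 && W.any fun T =>
      Nat.beq (Nat.land T p.1) 0 && Nat.beq (Nat.mod (pop (Nat.land T p.2)) 2) 1))

/-- A weight function whose sum over a list of at most `4096` numbers determines how often
`8`, `12` and `16` occur. -/
def score (w : ℕ) : ℕ :=
  bif Nat.beq w 8 then 1 else bif Nat.beq w 12 then 10000 else
    bif Nat.beq w 16 then 100000000 else 0

lemma score_eq (w : ℕ) :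
    score w = if w = 8 then 1 else if w = 12 then 10000 else if w = 16 then 100000000 else 0 := by
  have h : ∀ a b : ℕ, Nat.beq a b = decide (a = b) := fun a b => by
    rw [Bool.eq_iff_iff]; simp
  simp only [score, h, Bool.cond_decide]

lemma supp_full : supp 16777215 = Finset.univ := by
  rw [supp, Finset.filter_eq_self]
  decide

lemma sig_compl (p : ℕ × ℕ) :
    sig (supp p.2) (supp p.1)ᶜ = (-1) ^ (pop (Nat.land p.2 (Nat.xor p.1 16777215))) := by
  rw [pop_eq, supp_land, supp_xor, supp_full, ← Finset.top_eq_univ, symmDiff_top, sig, Finset.inter_comm]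
  rfl

lemma of_good {W : List ℕ} {p : ℕ × ℕ} (h : good W p = true) :
    ((supp p.1).card = 0 ∨ (supp p.1).card = 8 ∨ (supp p.1).card = 12 ∨ (supp p.1).card = 16 ∨
      (supp p.1).card = 24) ∧
    ((supp p.1).card = 12 → sig (supp p.2) (supp p.1)ᶜ = -1) ∧
    ((supp p.1).card = 16 → sig (supp p.2) (supp p.1)ᶜ = 1) ∧
    ((supp p.1).card = 8 → sig (supp p.2) (supp p.1)ᶜ = 1 ∧
      ∃ T ∈ W, Disjoint (supp p.1) (supp T) ∧ sig (supp p.2) (supp T) = -1) := by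
  have hmod : ∀ n : ℕ, Nat.mod n 2 = n % 2 := fun _ => rfl
  have hodd : ∀ n : ℕ, n % 2 = 1 → (-1 : ℤ) ^ n = -1 := fun n hn =>
    (Nat.odd_iff.mpr hn).neg_one_pow
  have heven : ∀ n : ℕ, n % 2 = 0 → (-1 : ℤ) ^ n = 1 := fun n hn =>
    (Nat.even_iff.mpr hn).neg_one_pow
  simp only [good, Bool.or_eq_true, Bool.and_eq_true, Nat.beq_eq, List.any_eq_true, hmod] at h
  rw [sig_compl, ← pop_eq]
  rcases h with (((h | h) | h) | h) | ⟨h, T, hT, hd, hs⟩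
  · simp [h]
  · simp [h]
  · rw [heven _ h.2]; simp [h]
  · rw [hodd _ h.2]; simp [h]
  · refine ⟨by simp [h], by simp [h], by simp [h], fun _ => ⟨heven _ h.2, T, hT, ?_, ?_⟩⟩
    · rw [Finset.disjoint_iff_inter_eq_empty, Finset.inter_comm, ← supp_land, hd]
      simp [supp]
    · rw [sig, ← supp_land, ← pop_eq, hodd _ hs]

lemma length_span (rs : List (ℕ × ℕ)) (p : ℕ × ℕ) : (span rs p).length = 2 ^ rs.length := by
  induction rs generalizing p with
  | nil => simp [span]
  | cons r rs ih => simp [span, ih, pow_succ]; ring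

lemma sum_val (ws : List ℕ) :
    (ws.map val).sum = (ws.count 8 : Poly) * val 8 + (ws.count 12 : Poly) * val 12 +
      (ws.count 16 : Poly) * val 16 := by
  induction ws with
  | nil => simp
  | cons w ws ih =>
    rw [List.map_cons, List.sum_cons, ih]
    by_cases h8 : w = 8
    · subst h8; simp; ring
    by_cases h12 : w = 12
    · subst h12; simp; ring
    by_cases h16 : w = 16
    · subst h16; simp; ring
    simp [h8, h12, h16, show val w = 0 by simp [val, h8, h12, h16]]

lemma sum_score (ws : List ℕ) :
    (ws.map score).sum = ws.count 8 + 10000 * ws.count 12 + 100000000 * ws.count 16 := by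
  induction ws with
  | nil => simp
  | cons w ws ih =>
    rw [List.map_cons, List.sum_cons, ih, score_eq]
    by_cases h8 : w = 8
    · subst h8; simp; ring
    by_cases h12 : w = 12
    · subst h12; simp; ring
    by_cases h16 : w = 16
    · subst h16; simp; ring
    simp [h8, h12, h16]

/-- The substituted weight enumerator, expanded over the dual of the residue code and reduced to
the words with coefficients `0`, `1`. -/
lemma aeval_swe_eq (R : Fin 12 → ℕ × ℕ) (K : Matrix (Fin 24) (Fin 12) (ZMod 4))
    (C : Submodule (ZMod 4) (Fin 24 → ZMod 4))
    (hC : ∀ c, c ∈ C ↔ ∃ u : Fin 12 → ZMod 4, c = ∑ i, u i • rep (R i))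
    (hK : (Matrix.of fun i => rep (R i)) * K = 1) :
    aeval (![X 0, X 2 - X 1, X 2 + X 1] : Fin 3 → Poly) (swe 2 2 C) =
      2 ^ 12 * ((span (List.ofFn R) (0, 0)).map fun q => ∑ T ∈ dual R, term (rep q) T).sum := by
  have hRC : ∀ i, rep (R i) ∈ C := fun i => (hC _).mpr ⟨Pi.single i 1, by
    simp [Pi.single_apply, ite_smul]⟩
  have hinj : Function.Injective fun u : Fin 12 → ZMod 4 => ∑ i, u i • rep (R i) := by
    refine Function.LeftInverse.injective (g := fun c => Matrix.vecMul c K) fun u => ?_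
    have : ∑ i, u i • rep (R i) = Matrix.vecMul u (Matrix.of fun i => rep (R i)) := by
      rw [Matrix.vecMul_eq_sum]; rfl
    simp only [this, Matrix.vecMul_vecMul, hK, Matrix.vecMul_one]
  rw [aeval_swe]
  have h1 : ∀ c : Fin 24 → ZMod 4, (if c ∈ C then ∏ j, phi (c j) else 0) =
      ∑ T, if c ∈ C then term c T else 0 := fun c => by
    split_ifs
    · exact prod_phi c
    · simp
  simp only [h1]
  rw [Finset.sum_comm, ← Finset.sum_subset (Finset.subset_univ (dual R))]
  · rw [Finset.sum_comm, ← sum_span R (fun c => ∑ T ∈ dual R, term c T)]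
    · have h2 : ∀ c : Fin 24 → ZMod 4, (∑ T ∈ dual R, if c ∈ C then term c T else 0) =
          if c ∈ C then ∑ T ∈ dual R, term c T else 0 := fun c => by
        split_ifs <;> simp
      simp only [h2]
      rw [← Finset.sum_filter]
      symm
      refine Finset.sum_bij (fun u _ => ∑ i, u i • rep (R i)) ?_ ?_ ?_ ?_
      · intro u _
        simpa using (hC _).mpr ⟨u, rfl⟩
      · intro u _ v _ h
        exact hinj h
      · intro c hc
        obtain ⟨u, hu⟩ := (hC c).mp (by simpa using hc)
        exact ⟨u, Finset.mem_univ _, hu.symm⟩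
      · intro u _
        have h0 : rep (0, 0) = 0 := by funext j; simp [rep]
        rw [h0, zero_add]
    · intro i c
      refine Finset.sum_congr rfl fun T hT => ?_
      rw [term_add_two, mem_dual.mp hT i]
      simp
  · intro T _ hT
    rw [mem_dual, not_forall] at hT
    obtain ⟨i, hi⟩ := hT
    exact sum_term_eq_zero C _ (hRC i) T hi

lemma sum_val_span (R : Fin 12 → ℕ × ℕ)
    (hscore : ((span (List.ofFn R) (0, 0)).map fun p => score (pop p.1)).sum = 75925760759) :
    ((span (List.ofFn R) (0, 0)).map fun q => val (pop q.1)).sum =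
      759 * val 8 + 2576 * val 12 + 759 * val 16 := by
  have e1 := sum_score ((span (List.ofFn R) (0, 0)).map fun q => pop q.1)
  have e2 := sum_val ((span (List.ofFn R) (0, 0)).map fun q => pop q.1)
  have hl : ((span (List.ofFn R) (0, 0)).map fun q => pop q.1).length = 4096 := by
    rw [List.length_map, length_span, List.length_ofFn]; norm_num
  rw [List.map_map] at e1 e2
  change ((span (List.ofFn R) (0, 0)).map fun p => score (pop p.1)).sum = _ at e1
  change ((span (List.ofFn R) (0, 0)).map fun p => val (pop p.1)).sum = _ at e2
  rw [e2]
  rw [hscore] at e1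
  have l8 := List.count_le_length (a := 8) (l := (span (List.ofFn R) (0, 0)).map fun q => pop q.1)
  have l12 :=
    List.count_le_length (a := 12) (l := (span (List.ofFn R) (0, 0)).map fun q => pop q.1)
  rw [hl] at l8 l12
  generalize List.count 8 _ = a at *
  generalize List.count 12 _ = b at *
  generalize List.count 16 _ = c at *
  obtain ⟨rfl, rfl, rfl⟩ : a = 759 ∧ b = 2576 ∧ c = 759 := by omega
  norm_num

lemma smul_two_pow_mul (A : Poly) : ((2:ℚ) ^ 12)⁻¹ • ((2 : Poly) ^ 12 * A) = A := by
  rw [show (2 : Poly) ^ 12 = C ((2 : ℚ) ^ 12) by rw [map_pow, map_ofNat], ← smul_eq_C_mul, smul_smul]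
  norm_num

lemma dp_sum_eq (L : List (ℕ × ℕ)) (F : ℕ × ℕ → Poly) (hF : ∀ q ∈ L, dp (F q) = val (pop q.1))
    (hL : (L.map fun q => val (pop q.1)).sum = 759 * val 8 + 2576 * val 12 + 759 * val 16) :
    divPart (L.map F).sum 0 1 =
      759 * X 0 ^ 16 * X 1 ^ 8 - 2576 * X 0 ^ 12 * X 1 ^ 12 + 759 * X 0 ^ 8 * X 1 ^ 16
        - 1518 * X 0 ^ 8 * X 1 ^ 8 * X 2 ^ 8 := by
  have h : dp (L.map F).sum = (L.map fun q => val (pop q.1)).sum := by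
    rw [map_list_sum, List.map_map]
    exact congrArg List.sum (List.map_congr_left hF)
  rw [hL] at h
  refine h.trans ?_
  simp [val, mon]
  ring

/-- The theorem for a code given by generators `R` passing the finite checks. -/
lemma main_of_rows (R : Fin 12 → ℕ × ℕ) (K : Matrix (Fin 24) (Fin 12) (ZMod 4)) (W : List ℕ)
    (C : Submodule (ZMod 4) (Fin 24 → ZMod 4))
    (hC : ∀ c, c ∈ C ↔ ∃ u : Fin 12 → ZMod 4, c = ∑ i, u i • rep (R i))
    (hK : (Matrix.of fun i => rep (R i)) * K = 1)
    (horth : ∀ i' i, (pop (Nat.land (R i').1 (R i).1)) % 2 = 0)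
    (heven : ∀ i, (pop (Nat.land 16777215 (R i).1)) % 2 = 0)
    (hW : ∀ T ∈ W, ∀ i, (pop (Nat.land T (R i).1)) % 2 = 0)
    (hgood : (span (List.ofFn R) (0, 0)).all (good W) = true)
    (hscore : ((span (List.ofFn R) (0, 0)).map fun p => score (pop p.1)).sum = 75925760759) :
    divPart (((2:ℚ) ^ 12)⁻¹ •
        aeval (![X 0, X 2 - X 1, X 2 + X 1] : Fin 3 → MvPolynomial (Fin 3) ℚ) (swe 2 2 C))
      0 1 =
      759 * X 0 ^ 16 * X 1 ^ 8 - 2576 * X 0 ^ 12 * X 1 ^ 12 + 759 * X 0 ^ 8 * X 1 ^ 16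
        - 1518 * X 0 ^ 8 * X 1 ^ 8 * X 2 ^ 8 := by
  have hRD : ∀ i, supp (R i).1 ∈ dual R := fun i => supp_mem_dual (horth i)
  have huniv : Finset.univ ∈ dual R := by
    rw [← supp_full]
    exact supp_mem_dual heven
  have hg : ∀ q ∈ span (List.ofFn R) (0, 0), good W q = true := List.all_eq_true.mp hgood
  have hw : ∀ T ∈ dual R,
      T.card = 0 ∨ T.card = 8 ∨ T.card = 12 ∨ T.card = 16 ∨ T.card = 24 := by
    intro T hT
    obtain ⟨q, hq, rfl⟩ := exists_of_mem_dual R K hK hRD T hT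
    exact (of_good (hg q hq)).1
  have hempty : supp (0, 0).1 ∈ dual R := supp_mem_dual fun i => by
    rw [pop_eq, supp_land]; simp [supp]
  have hval : ∀ q ∈ span (List.ofFn R) (0, 0),
      dp (∑ T ∈ dual R, term (rep q) T) = val (pop q.1) := by
    intro q hq
    obtain ⟨-, h12, h16, h8⟩ := of_good (hg q hq)
    rw [pop_eq]
    refine dp_word (dual R) dual_symmDiff huniv hw q
      (supp_span_mem_dual _ ?_ _ hempty q hq) h12 h16 fun h => ?_
    · intro r hr
      obtain ⟨i, rfl⟩ := List.mem_ofFn.mp hr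
      exact hRD i
    · obtain ⟨hc, T, hT, hd, hs⟩ := h8 h
      exact ⟨hc, supp T, supp_mem_dual (hW T hT), hd, hs⟩
  have hA : ((2:ℚ) ^ 12)⁻¹ •
      aeval (![X 0, X 2 - X 1, X 2 + X 1] : Fin 3 → MvPolynomial (Fin 3) ℚ) (swe 2 2 C) =
      ((span (List.ofFn R) (0, 0)).map fun q => ∑ T ∈ dual R, term (rep q) T).sum := by
    rw [aeval_swe_eq R K C hC hK]
    exact smul_two_pow_mul _
  rw [hA]
  exact dp_sum_eq _ _ hval (sum_val_span R hscore)

/-! ### The two Hensel lifts -/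

/-- The polynomial of degree at most `11` over `ℤ/4ℤ` with coefficients `v 0, …, v 11`. -/
def ofCoeffs (v : Fin 12 → ZMod 4) : Polynomial (ZMod 4) :=
  ∑ i : Fin 12, Polynomial.C (v i) * Polynomial.X ^ (i : ℕ)

lemma coeff_ofCoeffs (v : Fin 12 → ZMod 4) (n : ℕ) :
    (ofCoeffs v).coeff n = if h : n < 12 then v ⟨n, h⟩ else 0 := by
  simp only [ofCoeffs, Polynomial.finsetSum_coeff, Polynomial.coeff_C_mul_X_pow]
  split_ifs with h
  · rw [Finset.sum_eq_single ⟨n, h⟩]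
    · simp
    · intro b _ hb
      rw [if_neg]
      rintro rfl
      exact hb rfl
    · simp
  · refine Finset.sum_eq_zero fun i _ => if_neg ?_
    rintro rfl
    exact h i.2

lemma ofCoeffs_mul_coeff (v : Fin 12 → ZMod 4) (p : Polynomial (ZMod 4)) (n : ℕ) :
    (ofCoeffs v * p).coeff n = ∑ i : Fin 12, v i * if (i : ℕ) ≤ n then p.coeff (n - i) else 0 := by
  simp only [ofCoeffs, Finset.sum_mul, Polynomial.finsetSum_coeff, mul_assoc,
    Polynomial.coeff_C_mul, Polynomial.coeff_X_pow_mul']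

lemma natDegree_ofCoeffs_le (v : Fin 12 → ZMod 4) : (ofCoeffs v).natDegree ≤ 11 := by
  rw [Polynomial.natDegree_le_iff_coeff_eq_zero]
  intro n hn
  rw [coeff_ofCoeffs, dif_neg (by omega)]

lemma monic_ofCoeffs (v : Fin 12 → ZMod 4) (hv : v 11 = 1) : (ofCoeffs v).Monic :=
  Polynomial.monic_of_natDegree_le_of_coeff_eq_one 11 (natDegree_ofCoeffs_le v)
    (by rw [coeff_ofCoeffs]; simpa using hv)

lemma natDegree_ofCoeffs (v : Fin 12 → ZMod 4) (hv : v 11 = 1) : (ofCoeffs v).natDegree = 11 :=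
  le_antisymm (natDegree_ofCoeffs_le v) (Polynomial.le_natDegree_of_ne_zero (by
    rw [coeff_ofCoeffs, dif_pos (by omega)]
    exact fun h => absurd (hv.symm.trans h) (by decide)))

/-- Coefficients of the first degree-11 factor of `x^23 - 1` over `ℤ/4ℤ`. -/
def v1 : Fin 12 → ZMod 4 := ![3, 2, 1, 0, 1, 1, 1, 2, 0, 0, 3, 1]

/-- Coefficients of the second degree-11 factor of `x^23 - 1` over `ℤ/4ℤ`. -/
def v2 : Fin 12 → ZMod 4 := ![3, 1, 0, 0, 2, 3, 3, 3, 0, 3, 2, 1]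

lemma four_eq_zero : (4 : Polynomial (ZMod 4)) = 0 := by
  have h : ((4 : ℕ) : Polynomial (ZMod 4)) = 0 := CharP.cast_eq_zero _ 4
  exact_mod_cast h

lemma ofCoeffs_v1 : ofCoeffs v1 = 3 + 2 * Polynomial.X + Polynomial.X ^ 2 + Polynomial.X ^ 4 +
    Polynomial.X ^ 5 + Polynomial.X ^ 6 + 2 * Polynomial.X ^ 7 + 3 * Polynomial.X ^ 10 +
    Polynomial.X ^ 11 := by
  have h2 : Polynomial.C (2 : ZMod 4) = 2 := rfl
  have h3 : Polynomial.C (3 : ZMod 4) = 3 := rfl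
  simp [ofCoeffs, v1, Fin.sum_univ_succ, h2, h3]
  ring

lemma ofCoeffs_v2 : ofCoeffs v2 = 3 + Polynomial.X + 2 * Polynomial.X ^ 4 +
    3 * Polynomial.X ^ 5 + 3 * Polynomial.X ^ 6 + 3 * Polynomial.X ^ 7 + 3 * Polynomial.X ^ 9 +
    2 * Polynomial.X ^ 10 + Polynomial.X ^ 11 := by
  have h2 : Polynomial.C (2 : ZMod 4) = 2 := rfl
  have h3 : Polynomial.C (3 : ZMod 4) = 3 := rfl
  simp [ofCoeffs, v2, Fin.sum_univ_succ, h2, h3]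
  ring

lemma factor : (Polynomial.X - 1) * ofCoeffs v1 * ofCoeffs v2 =
    (Polynomial.X ^ 23 - 1 : Polynomial (ZMod 4)) := by
  rw [ofCoeffs_v1, ofCoeffs_v2]
  generalize (Polynomial.X : Polynomial (ZMod 4)) = x
  -- the multiplier is the quotient by `4` of the difference of the two sides over `ℤ`
  linear_combination (-2 + x ^ 2 + x ^ 3 - 2 * x ^ 4 - 2 * x ^ 5 - x ^ 6 - x ^ 7 + 3 * x ^ 8 -
    x ^ 9 - 3 * x ^ 10 + 3 * x ^ 12 + x ^ 13 - x ^ 14 - x ^ 16 + x ^ 17 + 3 * x ^ 18 - x ^ 19 +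
    x ^ 21 + x ^ 22) * four_eq_zero

/-- A Bézout identity modulo `2` for the first factor and its cofactor. -/
lemma bezout1 : ∃ a b e, a * ofCoeffs v1 + b * ((Polynomial.X - 1) * ofCoeffs v2) =
    (1 + 2 * e : Polynomial (ZMod 4)) := by
  rw [ofCoeffs_v1, ofCoeffs_v2]
  generalize (Polynomial.X : Polynomial (ZMod 4)) = x
  refine ⟨x ^ 5 + x ^ 9 + x ^ 11, 1 + x ^ 2 + x ^ 4 + x ^ 6 + x ^ 10,
    -2 + x - x ^ 2 + x ^ 3 - 2 * x ^ 4 + 2 * x ^ 5 - x ^ 6 + x ^ 7 + x ^ 8 + x ^ 10 +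
    2 * x ^ 11 + 5 * x ^ 12 + 2 * x ^ 14 + x ^ 15 + 3 * x ^ 16 + x ^ 17 + 3 * x ^ 18 + x ^ 20 +
    2 * x ^ 21 + x ^ 22, ?_⟩
  ring

/-- A Bézout identity modulo `2` for the second factor and its cofactor. -/
lemma bezout2 : ∃ a b e, a * ofCoeffs v2 + b * ((Polynomial.X - 1) * ofCoeffs v1) =
    (1 + 2 * e : Polynomial (ZMod 4)) := by
  rw [ofCoeffs_v1, ofCoeffs_v2]
  generalize (Polynomial.X : Polynomial (ZMod 4)) = x
  refine ⟨x + x ^ 3 + x ^ 7, 1 + x ^ 6,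
    -2 + 2 * x + x ^ 2 + 2 * x ^ 3 + x ^ 5 + 4 * x ^ 7 + 5 * x ^ 8 + 2 * x ^ 9 + x ^ 10 +
    3 * x ^ 11 + 4 * x ^ 12 + 2 * x ^ 13 + 3 * x ^ 14 + 2 * x ^ 17 + x ^ 18, ?_⟩
  ring

/-- Uniqueness of the Hensel lift: a monic factor of `P * H` that agrees with `P` modulo `2` is
`P`, since it stays coprime to `H`. -/
lemma lift_unique (φ : ZMod 4 →+* ZMod 2) {G P H : Polynomial (ZMod 4)} (hG : G.Monic)
    (hP : P.Monic) (hd : P.natDegree ≤ G.natDegree) (hmap : G.map φ = P.map φ) (hdvd : G ∣ P * H)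
    (hbez : ∃ a b e, a * P + b * H = 1 + 2 * e) : G = P := by
  obtain ⟨a, b, e, hbez⟩ := hbez
  have h2 : Polynomial.C (2 : ZMod 4) ∣ G - P := by
    rw [Polynomial.C_dvd_iff_dvd_coeff]
    intro i
    have h : φ ((G - P).coeff i) = 0 := by
      rw [← Polynomial.coeff_map, Polynomial.map_sub, hmap, sub_self, Polynomial.coeff_zero]
    have hφ : φ = ZMod.castHom (by norm_num : (2 : ℕ) ∣ 4) (ZMod 2) := Subsingleton.elim _ _
    rw [hφ] at h
    generalize (G - P).coeff i = x at h
    revert x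
    decide
  obtain ⟨r, hr⟩ := h2
  have hC2 : Polynomial.C (2 : ZMod 4) = 2 := rfl
  rw [hC2] at hr
  have hcop : IsCoprime G H := by
    refine ⟨(1 - 2 * (e + a * r)) * a, (1 - 2 * (e + a * r)) * b, ?_⟩
    linear_combination (1 - 2 * (e + a * r)) * hbez + (1 - 2 * (e + a * r)) * a * hr -
      (e + a * r) ^ 2 * four_eq_zero
  exact (Polynomial.eq_of_monic_of_dvd_of_natDegree_le hG hP (hcop.dvd_of_dvd_mul_right hdvd) hd).symm

/-- An irreducible degree-11 factor of `x^23 - 1` modulo `2` is one of the two known ones. -/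
lemma factor_cases (φ : ZMod 4 →+* ZMod 2) (g : Polynomial (ZMod 2)) (hg : IsQRFactor 2 g) :
    g = (ofCoeffs v1).map φ ∨ g = (ofCoeffs v2).map φ := by
  obtain ⟨hm, hd, hirr, hdvd⟩ := hg
  have hprod := congrArg (Polynomial.map φ) factor
  simp only [Polynomial.map_mul, Polynomial.map_sub, Polynomial.map_pow, Polynomial.map_X,
    Polynomial.map_one] at hprod
  rw [← hprod] at hdvd
  have key : ∀ v : Fin 12 → ZMod 4, v 11 = 1 → g ∣ (ofCoeffs v).map φ →
      g = (ofCoeffs v).map φ := fun v hv h =>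
    (Polynomial.eq_of_monic_of_dvd_of_natDegree_le hm ((monic_ofCoeffs v hv).map φ) h (by
      rw [(monic_ofCoeffs v hv).natDegree_map, natDegree_ofCoeffs v hv, hd])).symm
  rcases hirr.prime.dvd_or_dvd hdvd with h | h
  · rcases hirr.prime.dvd_or_dvd h with h | h
    · have h0 : (Polynomial.X - 1 : Polynomial (ZMod 2)) ≠ 0 := Polynomial.X_sub_C_ne_zero 1
      have h1 := Polynomial.natDegree_le_of_dvd h h0
      have h2 : (Polynomial.X - 1 : Polynomial (ZMod 2)).natDegree = 1 :=
        Polynomial.natDegree_X_sub_C 1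
      omega
    · exact Or.inl (key v1 rfl h)
  · exact Or.inr (key v2 rfl h)

/-! ### Generator matrices of the two codes -/

/-- Reduction modulo `G * H` of a multiple of `G`. -/
lemma mul_modByMonic {G H : Polynomial (ZMod 4)} (hG : G.Monic) (hH : H.Monic)
    (f : Polynomial (ZMod 4)) : (f * G) %ₘ (G * H) = (f %ₘ H) * G := by
  refine (Polynomial.div_modByMonic_unique (f /ₘ H) _ (hG.mul hH) ⟨?_, ?_⟩).2
  · linear_combination G * Polynomial.modByMonic_add_div f H
  · rw [mul_comm G H, hG.degree_mul, hG.degree_mul]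
    have : Nontrivial (ZMod 4) := ⟨0, 1, by decide⟩
    have h := Polynomial.degree_modByMonic_lt f hH
    have h1 : G.degree ≠ ⊥ := Polynomial.degree_ne_bot.2 hG.ne_zero
    exact WithBot.add_lt_add_right h1 h

/-- The multiples of a monic degree-11 factor of `x^23 - 1` are spanned by its first twelve
shifts, so the extended cyclic code is spanned by the extended shifts. -/
lemma mem_code (R : Fin 12 → ℕ × ℕ) (G H : Polynomial (ZMod 4)) (hG : G.Monic)
    (hd : G.natDegree = 11) (hGH : G * H = Polynomial.X ^ 23 - 1)
    (hR : ∀ (i : Fin 12) (j : Fin 23), rep (R i) (Fin.castSucc j) =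
      if (i : ℕ) ≤ j then G.coeff (j - i) else 0)
    (hR' : ∀ i, rep (R i) (Fin.last 23) = - ∑ j : Fin 23, rep (R i) (Fin.castSucc j))
    (c : Fin 24 → ZMod 4) :
    ((∃ f : Polynomial (ZMod 4), ∀ j : Fin 23,
          c (Fin.castSucc j) = ((f * G) %ₘ (Polynomial.X ^ 23 - 1)).coeff (j : ℕ)) ∧
        c (Fin.last 23) = - ∑ j : Fin 23, c (Fin.castSucc j)) ↔
      ∃ u : Fin 12 → ZMod 4, c = ∑ i, u i • rep (R i) := by
  have : Nontrivial (ZMod 4) := ⟨0, 1, by decide⟩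
  have hX : (Polynomial.X ^ 23 - 1 : Polynomial (ZMod 4)).Monic :=
    Polynomial.monic_X_pow_sub_C 1 (by norm_num)
  have hH : H.Monic := hG.of_mul_monic_left (hGH ▸ hX)
  have hHd : H.natDegree = 12 := by
    have h := hG.natDegree_mul hH
    rw [hGH, hd] at h
    have h1 : (Polynomial.X ^ 23 - 1 : Polynomial (ZMod 4)).natDegree = 23 :=
      Polynomial.natDegree_X_pow_sub_C (r := (1 : ZMod 4))
    omega
  have hcoef : ∀ (u : Fin 12 → ZMod 4) (j : Fin 23), (∑ i, u i • rep (R i)) (Fin.castSucc j) =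
      (ofCoeffs u * G).coeff j := by
    intro u j
    simp only [ofCoeffs_mul_coeff, Finset.sum_apply, Pi.smul_apply, smul_eq_mul, hR]
  have hpar : ∀ u : Fin 12 → ZMod 4, (∑ i, u i • rep (R i)) (Fin.last 23) =
      - ∑ j : Fin 23, (∑ i, u i • rep (R i)) (Fin.castSucc j) := by
    intro u
    simp only [Finset.sum_apply, Pi.smul_apply, smul_eq_mul]
    rw [Finset.sum_comm]
    simp only [hR', ← Finset.mul_sum, mul_neg, Finset.sum_neg_distrib]
  constructor
  · rintro ⟨⟨f, hf⟩, hl⟩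
    have hu : f %ₘ H = ofCoeffs fun i => (f %ₘ H).coeff i := by
      ext n
      rw [coeff_ofCoeffs]
      split_ifs with h
      · rfl
      · refine Polynomial.coeff_eq_zero_of_natDegree_lt ?_
        have := Polynomial.natDegree_modByMonic_lt f hH (by rintro rfl; simp at hHd)
        omega
    have hc : ∀ j : Fin 23, c (Fin.castSucc j) =
        (∑ i : Fin 12, (f %ₘ H).coeff i • rep (R i)) (Fin.castSucc j) := by
      intro j
      rw [hf, ← hGH, mul_modByMonic hG hH, hu]
      exact (hcoef _ j).symm.trans (by rw [← hu])
    refine ⟨fun i => (f %ₘ H).coeff i, funext fun j => ?_⟩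
    refine Fin.lastCases ?_ hc j
    rw [hl, hpar]
    exact congrArg _ (Finset.sum_congr rfl fun j _ => hc j)
  · rintro ⟨u, rfl⟩
    refine ⟨⟨ofCoeffs u, fun j => ?_⟩, hpar u⟩
    rw [hcoef, ← hGH, mul_modByMonic hG hH, (Polynomial.modByMonic_eq_self_iff hH).2]
    refine Polynomial.degree_lt_degree ?_
    have := natDegree_ofCoeffs_le u
    omega

/-- Masks of the shift by `i` of the cyclic word with masks `o`, `h`, extended by the check
coordinate `l`. -/
def row (o h l i : ℕ) : ℕ × ℕ :=
  (o <<< i ||| (l % 2) <<< 23, h <<< i ||| (l / 2) <<< 23)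

/-- The generator matrix formed by the first twelve extended shifts. -/
def rows (o h l : ℕ) : Fin 12 → ℕ × ℕ := fun i => row o h l i

/-- Cyclic rotation by `k` of the lowest `23` binary digits; the digit at position `23` is kept. -/
def rot (k T : ℕ) : ℕ :=
  ((T % 2 ^ 23) <<< k) % 2 ^ 23 ||| (T % 2 ^ 23) >>> (23 - k) ||| (T / 2 ^ 23) <<< 23

/-- All rotations of the given masks. -/
def wits (l : List ℕ) : List ℕ := l.flatMap fun T => (List.range 23).map fun k => rot k T

/-- The Toeplitz right inverse of a matrix of shifts; `w` lists the coefficients of the power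
series inverse of the shifted polynomial. -/
def toep (w : Fin 12 → ZMod 4) : Matrix (Fin 24) (Fin 12) (ZMod 4) := fun j i =>
  if (j : ℕ) ≤ i then w ⟨i - j, by omega⟩ else 0

/-- Coefficients of the inverse of `ofCoeffs v1` as a power series modulo `x^12`. -/
def w1 : Fin 12 → ZMod 4 := ![3, 2, 3, 0, 2, 1, 0, 0, 1, 3, 3, 3]

/-- Coefficients of the inverse of `ofCoeffs v2` as a power series modulo `x^12`. -/
def w2 : Fin 12 → ZMod 4 := ![3, 3, 3, 3, 1, 0, 0, 1, 2, 0, 3, 2]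

/-- The theorem for the code of a given generator polynomial, reduced to closed finite checks. -/
lemma main_of_coeffs (v w : Fin 12 → ZMod 4) (o h l : ℕ) (L : List ℕ) (H : Polynomial (ZMod 4))
    (C : Submodule (ZMod 4) (Fin 24 → ZMod 4)) (hv : v 11 = 1)
    (hH : ofCoeffs v * H = Polynomial.X ^ 23 - 1)
    (hC : ∀ c : Fin 24 → ZMod 4, c ∈ C ↔
      ((∃ f : Polynomial (ZMod 4), ∀ j : Fin 23,
          c (Fin.castSucc j) = ((f * ofCoeffs v) %ₘ (Polynomial.X ^ 23 - 1)).coeff (j : ℕ)) ∧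
        c (Fin.last 23) = - ∑ j : Fin 23, c (Fin.castSucc j)))
    (hR : ∀ (i : Fin 12) (j : Fin 23), rep (rows o h l i) (Fin.castSucc j) =
      if (i : ℕ) ≤ j then (if hn : (j : ℕ) - i < 12 then v ⟨j - i, hn⟩ else 0) else 0)
    (hR' : ∀ i, rep (rows o h l i) (Fin.last 23) =
      - ∑ j : Fin 23, rep (rows o h l i) (Fin.castSucc j))
    (hK : ∀ i i', ∑ j, rep (rows o h l i) j * toep w j i' = if i = i' then 1 else 0)
    (horth : ∀ i' i, (pop (Nat.land (rows o h l i').1 (rows o h l i).1)) % 2 = 0)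
    (heven : ∀ i, (pop (Nat.land 16777215 (rows o h l i).1)) % 2 = 0)
    (hW : ∀ T ∈ wits L, ∀ i, (pop (Nat.land T (rows o h l i).1)) % 2 = 0)
    (hgood : (span (List.ofFn (rows o h l)) (0, 0)).all (good (wits L)) = true)
    (hscore : ((span (List.ofFn (rows o h l)) (0, 0)).map fun p => score (pop p.1)).sum =
      75925760759) :
    divPart (((2:ℚ) ^ 12)⁻¹ •
        aeval (![X 0, X 2 - X 1, X 2 + X 1] : Fin 3 → MvPolynomial (Fin 3) ℚ) (swe 2 2 C))
      0 1 =
      759 * X 0 ^ 16 * X 1 ^ 8 - 2576 * X 0 ^ 12 * X 1 ^ 12 + 759 * X 0 ^ 8 * X 1 ^ 16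
        - 1518 * X 0 ^ 8 * X 1 ^ 8 * X 2 ^ 8 := by
  refine main_of_rows (rows o h l) (toep w) (wits L) C (fun c => ?_) ?_ horth heven hW hgood hscore
  · refine (hC c).trans (mem_code _ _ H (monic_ofCoeffs v hv) (natDegree_ofCoeffs v hv) hH ?_ hR' c)
    intro i j
    rw [hR, coeff_ofCoeffs]
  · ext i i'
    rw [Matrix.mul_apply, Matrix.one_apply]
    exact hK i i'

set_option maxRecDepth 100000 in
/-- The witness list consists of the rotations of four Golay codewords; each octad has one among
them that is disjoint from it and has sign `-1`. -/
lemma good1 : (span (List.ofFn (rows 3189 1155 1)) (0, 0)).all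
    (good (wits [5279, 18147, 69395, 8398155])) = true := by decide +kernel

set_option maxRecDepth 100000 in
/-- The tally `759 + 2576 * 10^4 + 759 * 10^8` is the weight distribution of the Golay code. -/
lemma score1 : ((span (List.ofFn (rows 3189 1155 1)) (0, 0)).map fun p => score (pop p.1)).sum =
    75925760759 := by decide +kernel

set_option maxRecDepth 100000 in
lemma good2 : (span (List.ofFn (rows 2787 1777 3)) (0, 0)).all
    (good (wits [7973, 25521, 102881, 8402089])) = true := by decide +kernel

set_option maxRecDepth 100000 in
lemma score2 : ((span (List.ofFn (rows 2787 1777 3)) (0, 0)).map fun p => score (pop p.1)).sum =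
    75925760759 := by decide +kernel

-- The masks `3189`, `1155` encode the entries of `v1`, and `1` is minus their sum modulo `4`.
set_option maxRecDepth 100000 in
lemma main1 (C : Submodule (ZMod 4) (Fin 24 → ZMod 4))
    (hC : ∀ c : Fin 24 → ZMod 4, c ∈ C ↔
      ((∃ f : Polynomial (ZMod 4), ∀ j : Fin 23,
          c (Fin.castSucc j) = ((f * ofCoeffs v1) %ₘ (Polynomial.X ^ 23 - 1)).coeff (j : ℕ)) ∧
        c (Fin.last 23) = - ∑ j : Fin 23, c (Fin.castSucc j))) :
    divPart (((2:ℚ) ^ 12)⁻¹ •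
        aeval (![X 0, X 2 - X 1, X 2 + X 1] : Fin 3 → MvPolynomial (Fin 3) ℚ) (swe 2 2 C))
      0 1 =
      759 * X 0 ^ 16 * X 1 ^ 8 - 2576 * X 0 ^ 12 * X 1 ^ 12 + 759 * X 0 ^ 8 * X 1 ^ 16
        - 1518 * X 0 ^ 8 * X 1 ^ 8 * X 2 ^ 8 :=
  main_of_coeffs v1 w1 3189 1155 1 [5279, 18147, 69395, 8398155]
    ((Polynomial.X - 1) * ofCoeffs v2) C rfl (by rw [← factor]; ring) hC
    (by decide +kernel) (by decide +kernel) (by decide +kernel) (by decide +kernel)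
    (by decide +kernel) (by decide +kernel) good1 score1

-- The masks `2787`, `1777` encode the entries of `v2`, and `3` is minus their sum modulo `4`.
set_option maxRecDepth 100000 in
lemma main2 (C : Submodule (ZMod 4) (Fin 24 → ZMod 4))
    (hC : ∀ c : Fin 24 → ZMod 4, c ∈ C ↔
      ((∃ f : Polynomial (ZMod 4), ∀ j : Fin 23,
          c (Fin.castSucc j) = ((f * ofCoeffs v2) %ₘ (Polynomial.X ^ 23 - 1)).coeff (j : ℕ)) ∧
        c (Fin.last 23) = - ∑ j : Fin 23, c (Fin.castSucc j))) :
    divPart (((2:ℚ) ^ 12)⁻¹ •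
        aeval (![X 0, X 2 - X 1, X 2 + X 1] : Fin 3 → MvPolynomial (Fin 3) ℚ) (swe 2 2 C))
      0 1 =
      759 * X 0 ^ 16 * X 1 ^ 8 - 2576 * X 0 ^ 12 * X 1 ^ 12 + 759 * X 0 ^ 8 * X 1 ^ 16
        - 1518 * X 0 ^ 8 * X 1 ^ 8 * X 2 ^ 8 :=
  main_of_coeffs v2 w2 2787 1777 3 [7973, 25521, 102881, 8402089]
    ((Polynomial.X - 1) * ofCoeffs v1) C rfl (by rw [← factor]; ring) hC
    (by decide +kernel) (by decide +kernel) (by decide +kernel) (by decide +kernel)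
    (by decide +kernel) (by decide +kernel) good2 score2

end LiftedQR

/-- The partial weight enumerator `D_{1,1}` for the binary lifted QR codes of length 24. -/
theorem stmt_5 (g : Polynomial (ZMod 2)) (hg : IsQRFactor 2 g)
    (g2 : Polynomial (ZMod 4)) (C2 : Submodule (ZMod 4) (Fin 24 → ZMod 4))
    (hC2 : IsLiftedQR (by norm_num : (2:ℕ) ∣ 4) g g2 C2) :
    divPart (((2:ℚ) ^ 12)⁻¹ •
        aeval (![X 0, X 2 - X 1, X 2 + X 1] : Fin 3 → MvPolynomial (Fin 3) ℚ) (swe 2 2 C2))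
      0 1 =
      759 * X 0 ^ 16 * X 1 ^ 8 - 2576 * X 0 ^ 12 * X 1 ^ 12 + 759 * X 0 ^ 8 * X 1 ^ 16
        - 1518 * X 0 ^ 8 * X 1 ^ 8 * X 2 ^ 8 := by
  obtain ⟨hm, hd, hdvd, hmap, hmem⟩ := hC2
  rcases LiftedQR.factor_cases (ZMod.castHom (by norm_num : (2 : ℕ) ∣ 4) (ZMod 2)) g hg with h | h
  · have h2 : g2 = LiftedQR.ofCoeffs LiftedQR.v1 :=
      LiftedQR.lift_unique _ hm (LiftedQR.monic_ofCoeffs _ rfl)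
        ((LiftedQR.natDegree_ofCoeffs_le _).trans hd.ge) (hmap.trans h)
        (by rw [← LiftedQR.factor] at hdvd; convert hdvd using 1; ring) LiftedQR.bezout1
    subst h2
    exact LiftedQR.main1 C2 hmem
  · have h2 : g2 = LiftedQR.ofCoeffs LiftedQR.v2 :=
      LiftedQR.lift_unique _ hm (LiftedQR.monic_ofCoeffs _ rfl)
        ((LiftedQR.natDegree_ofCoeffs_le _).trans hd.ge) (hmap.trans h)
        (by rw [← LiftedQR.factor] at hdvd; convert hdvd using 1; ring) LiftedQR.bezout2
    subst h2
    exact LiftedQR.main2 C2 hmem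
end
end
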